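/- arXiv:2104.07729 — 2 statements merged into one kernel-verified Lean document; each statement's English description precedes it below -/
import Mathlib

section
/- For every k with k = 7 or k ≥ 9 and all sufficiently large n, no n-vertex W_{2k+1}-free simple graph attaining the maximum spectral radius among all n-vertex W_{2k+1}-free graphs attains the maximum number of edges among all n-vertex W_{2k+1}-free graphs; that is, SPEX(n, W_{2k+1}) ∩ EX(n, W_{2k+1}) = ∅. -/
/-- The wheel graph on `t` vertices: vertex `0` joined to every vertex of the
cycle `1, 2, …, t-1` (with `t-1` adjacent to `1`). -/
def wheelGraph (t : ℕ) : SimpleGraph (Fin t) where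
  Adj a b := a ≠ b ∧ (a.val = 0 ∨ b.val = 0 ∨ a.val + 1 = b.val ∨ b.val + 1 = a.val ∨
      (a.val = 1 ∧ b.val = t - 1) ∨ (b.val = 1 ∧ a.val = t - 1))
  symm := by
    constructor
    intro a b h
    exact ⟨h.1.symm, by tauto⟩
  loopless := by
    constructor
    intro a h
    exact h.1 rfl

/-- `G` contains a copy of `F`, i.e. a subgraph isomorphic to `F`. -/
def ContainsCopy {α β : Type*} (F : SimpleGraph α) (G : SimpleGraph β) : Prop :=
  ∃ f : α ↪ β, ∀ a b, F.Adj a b → G.Adj (f a) (f b)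

/-- `G` is `W_t`-free: it contains no subgraph isomorphic to the wheel on `t` vertices. -/
def WheelFree (t : ℕ) {n : ℕ} (G : SimpleGraph (Fin n)) : Prop :=
  ¬ ContainsCopy (wheelGraph t) G

/-- The spectral radius of `G`: the largest eigenvalue of its adjacency matrix. -/
noncomputable def lam1 {n : ℕ} (G : SimpleGraph (Fin n)) : ℝ := by
  classical
  exact sSup {μ : ℝ | Module.End.HasEigenvalue (Matrix.toLin' (G.adjMatrix ℝ)) μ}

/-- The number of edges of a graph on a finite vertex type. -/
noncomputable def edgeCount {V : Type*} [Fintype V] (G : SimpleGraph V) : ℕ := by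
  classical
  exact G.edgeFinset.card

/-- The degree of a vertex. -/
noncomputable def deg {n : ℕ} (G : SimpleGraph (Fin n)) (v : Fin n) : ℕ := by
  classical
  exact G.degree v

/-- The number of neighbours of `v` inside the set `A`. -/
noncomputable def degIn {n : ℕ} (G : SimpleGraph (Fin n)) (A : Finset (Fin n)) (v : Fin n) : ℕ := by
  classical
  exact (A.filter fun u => G.Adj v u).card

/-- The number of edges of `G` with one endpoint in `S` and the other outside `S`. -/
noncomputable def cutCount {n : ℕ} (G : SimpleGraph (Fin n)) (S : Finset (Fin n)) : ℕ := by
  classical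
  exact ((Finset.univ : Finset (Fin n × Fin n)).filter
    fun p => G.Adj p.1 p.2 ∧ p.1 ∈ S ∧ p.2 ∉ S).card

/-- `(S, T)` is a maximum cut of `G`. -/
def IsMaxCut {n : ℕ} (G : SimpleGraph (Fin n)) (S T : Finset (Fin n)) : Prop :=
  T = Sᶜ ∧ ∀ S' : Finset (Fin n), cutCount G S' ≤ cutCount G S

/-- `G` attains the maximum spectral radius among all `n`-vertex `W_t`-free graphs. -/
def IsSpexWheel (t : ℕ) {n : ℕ} (G : SimpleGraph (Fin n)) : Prop :=
  WheelFree t G ∧ ∀ H : SimpleGraph (Fin n), WheelFree t H → lam1 H ≤ lam1 G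

/-- `G` attains the maximum number of edges among all `n`-vertex `W_t`-free graphs. -/
def IsExWheel (t : ℕ) {n : ℕ} (G : SimpleGraph (Fin n)) : Prop :=
  WheelFree t G ∧ ∀ H : SimpleGraph (Fin n), WheelFree t H → edgeCount H ≤ edgeCount G



namespace OddWheel
open Finset
open scoped Classical

section Blocks
variable {V : Type*}

lemma wheel_of_list (G : SimpleGraph V) (k : ℕ) (hk : 2 ≤ k) (h : V) (l : List V)
    (hnd : l.Nodup) (hlen : l.length = 2 * k) (hh : ∀ x ∈ l, G.Adj h x)
    (hc : ∀ i (hi : i + 1 < l.length), G.Adj l[i] l[i+1])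
    (hl : G.Adj (l[l.length - 1]'(by omega)) (l[0]'(by omega))) :
    ContainsCopy (wheelGraph (2 * k + 1)) G := by
  have hmem : h ∉ l := fun hm => (hh h hm).ne rfl
  refine ⟨⟨fun i => if hi : i.val = 0 then h else l[i.val - 1]'(by omega), ?_⟩, ?_⟩
  · intro a b hab
    simp only at hab
    split_ifs at hab with h1 h2 h2
    · exact Fin.ext (by omega)
    · exact absurd (hab ▸ List.getElem_mem _) hmem
    · exact absurd (hab ▸ List.getElem_mem _) hmem
    · have := (List.Nodup.getElem_inj_iff hnd).1 hab
      exact Fin.ext (by omega)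
  · have key : ∀ a b : ℕ, ∀ (ha : a < l.length) (hb : b < l.length),
        (a + 1 = b ∨ (a + 1 = l.length ∧ b = 0)) → G.Adj l[a] l[b] := by
      intro a b ha hb hab
      rcases hab with rfl | ⟨h1, rfl⟩
      · exact hc a hb
      · have : a = l.length - 1 := by omega
        subst this
        exact hl
    rintro ⟨a, ha⟩ ⟨b, hb⟩ ⟨hne, hab⟩
    simp only [ne_eq, Fin.mk.injEq] at hne
    simp only at hab
    change G.Adj (if hi : a = 0 then h else l[a - 1]'(by omega))
      (if hi : b = 0 then h else l[b - 1]'(by omega))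
    split_ifs with h1 h2 h2
    · omega
    · exact hh _ (List.getElem_mem _)
    · exact (hh _ (List.getElem_mem _)).symm
    · by_cases hc1 : (a - 1 + 1 = b - 1 ∨ (a - 1 + 1 = l.length ∧ b - 1 = 0))
      · exact key _ _ _ _ hc1
      · exact (key (b-1) (a-1) (by omega) (by omega) (by omega)).symm

/-- assemble the rim -/
def rim : List V → List (List V) → List V
  | u :: U, p :: P => (u :: p) ++ rim U P
  | _, _ => []

lemma rim_perm : ∀ (U : List V) (P : List (List V)), U.length = P.length →
    (rim U P).Perm (U ++ P.flatten)
  | [], [], _ => by simp [rim]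
  | u :: U, p :: P, h => by
    have ih := rim_perm U P (by simpa using h)
    simp only [rim, List.flatten_cons, List.cons_append, List.perm_cons]
    refine (List.Perm.append_left p ih).trans ?_
    rw [← List.append_assoc, ← List.append_assoc]
    exact List.Perm.append_right _ List.perm_append_comm

lemma rim_chain (G : SimpleGraph V) : ∀ (U : List V) (P : List (List V)), U.length = P.length →
    (∀ p ∈ P, p ≠ [] ∧ p.IsChain G.Adj) → (∀ u ∈ U, ∀ p ∈ P, ∀ x ∈ p, G.Adj u x) →
    (rim U P).IsChain G.Adj ∧ (∀ x ∈ (rim U P).head?, x ∈ U) ∧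
      (∀ x ∈ (rim U P).getLast?, x ∈ P.flatten)
  | [], [], _, _, _ => by simp [rim]
  | u :: U, p :: P, h, hp, ha => by
    obtain ⟨ih1, ih2, ih3⟩ := rim_chain G U P (by simpa using h)
      (fun q hq => hp q (by simp [hq])) (fun a ha' q hq => ha a (by simp [ha']) q (by simp [hq]))
    obtain ⟨hp1, hp2⟩ := hp p (by simp)
    have hlastp : ∀ x ∈ (u :: p).getLast?, x ∈ p := by
      intro x hx
      cases p with
      | nil => exact absurd rfl hp1
      | cons y q =>
        rw [List.getLast?_cons_cons] at hx
        exact List.mem_of_mem_getLast? hx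
    refine ⟨?_, ?_, ?_⟩
    · simp only [rim]
      rw [List.isChain_append]
      refine ⟨?_, ih1, ?_⟩
      · rw [List.isChain_cons]
        refine ⟨fun y hy => ha u (by simp) p (by simp) y (List.mem_of_mem_head? hy), hp2⟩
      · intro x hx y hy
        exact (ha y (by simp [ih2 y hy]) p (by simp) x (hlastp x hx)).symm
    · intro x hx
      simp [rim] at hx
      simp [hx]
    · intro x hx
      simp only [rim, List.getLast?_append] at hx
      rw [List.flatten_cons, List.mem_append]
      cases hr : (rim U P).getLast? with
      | none => 
        rw [hr] at hx
        exact Or.inl (hlastp x (by simpa using hx))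
      | some z =>
        rw [hr] at hx
        right
        apply ih3
        rw [hr]
        simpa using hx

lemma wheel_of_blocks (G : SimpleGraph V) (k : ℕ) (hk : 2 ≤ k) (h : V) (U : List V)
    (P : List (List V)) (hUP : U.length = P.length) (hlen : U.length + P.flatten.length = 2 * k)
    (hU : U.Nodup) (hP : P.flatten.Nodup) (hp : ∀ p ∈ P, p ≠ [] ∧ p.IsChain G.Adj)
    (ha : ∀ u ∈ U, ∀ x ∈ P.flatten, G.Adj u x) (hhU : ∀ u ∈ U, G.Adj h u)
    (hhP : ∀ x ∈ P.flatten, G.Adj h x) : ContainsCopy (wheelGraph (2 * k + 1)) G := by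
  have hperm := rim_perm U P hUP
  obtain ⟨c1, c2, c3⟩ := rim_chain G U P hUP hp
    (fun u hu p hp x hx => ha u hu x (List.mem_flatten.2 ⟨p, hp, hx⟩))
  have hl : (rim U P).length = 2 * k := by rw [hperm.length_eq, List.length_append, hlen]
  apply wheel_of_list G k hk h (rim U P) ?_ hl
  · intro x hx
    rw [hperm.mem_iff, List.mem_append] at hx
    exact hx.elim (hhU x) (hhP x)
  · rw [List.isChain_iff_getElem] at c1
    exact c1
  · refine (ha _ (c2 _ ?_) _ (c3 _ ?_)).symm
    · rw [List.head?_eq_getElem?, List.getElem?_eq_getElem (by omega)]; simp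
    · rw [List.getLast?_eq_getElem?, List.getElem?_eq_getElem (by omega)]; simp
  · rw [hperm.nodup_iff, List.nodup_append]
    refine ⟨hU, hP, ?_⟩
    rintro a ha1 b hb rfl
    exact (ha a ha1 a hb).ne rfl

/-- A set `T` in which paths on `r` vertices can be found avoiding any small set. -/
def HasPaths (G : SimpleGraph V) (T : Finset V) (F0 r : ℕ) : Prop :=
  ∀ F : Finset V, F.card ≤ F0 → ∃ p : List V, p.length = r ∧ p.Nodup ∧ p.IsChain G.Adj ∧
    (∀ x ∈ p, x ∈ T) ∧ (∀ x ∈ p, x ∉ F)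

lemma pieces_exist (G : SimpleGraph V) (T : Finset V) (F0 : ℕ) :
    ∀ (R : List ℕ), (∀ r ∈ R, 1 ≤ r ∧ HasPaths G T F0 r) → ∀ F : Finset V, 
      F.card + R.sum ≤ F0 → ∃ P : List (List V), P.length = R.length ∧
      P.flatten.length = R.sum ∧ P.flatten.Nodup ∧ (∀ p ∈ P, p ≠ [] ∧ p.IsChain G.Adj) ∧
      (∀ x ∈ P.flatten, x ∈ T ∧ x ∉ F)
  | [], _, F, _ => ⟨[], by simp⟩
  | r :: R, hR, F, hF => by
    simp only [List.sum_cons] at hF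
    obtain ⟨p, hp1, hp2, hp3, hp4, hp5⟩ := (hR r (by simp)).2 F (by omega)
    have hr := (hR r (by simp)).1
    have hc : (F ∪ p.toFinset).card ≤ F.card + r := by
      refine (card_union_le _ _).trans ?_
      have := p.toFinset_card_le
      omega
    obtain ⟨P, h1, h2, h3, h4, h5⟩ := pieces_exist G T F0 R (fun s hs => hR s (by simp [hs]))
      (F ∪ p.toFinset) (by omega)
    refine ⟨p :: P, by simp [h1], by simp [h2, hp1], ?_, ?_, ?_⟩
    · rw [List.flatten_cons, List.nodup_append]
      refine ⟨hp2, h3, ?_⟩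
      rintro a ha b hb rfl
      have := (h5 a hb).2
      simp [ha] at this
    · intro q hq
      rcases List.mem_cons.1 hq with rfl | hq
      · exact ⟨by rintro rfl; simp at hp1; omega, hp3⟩
      · exact h4 q hq
    · intro x hx
      rw [List.flatten_cons, List.mem_append] at hx
      rcases hx with hx | hx
      · exact ⟨hp4 x hx, hp5 x hx⟩
      · have := h5 x hx
        simp only [mem_union, not_or] at this
        exact ⟨this.1, this.2.1⟩

end Blocks
end OddWheel


namespace OddWheel
open Finset
open scoped Classical

section Basic
set_option linter.unusedSectionVars false
variable {V : Type*} [Fintype V] [DecidableEq V]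

/-- neighbours of `v` inside `X` -/
noncomputable def nb (G : SimpleGraph V) (X : Finset V) (v : V) : Finset V :=
  X.filter fun u => G.Adj v u

/-- number of neighbours of `v` inside `X` -/
noncomputable def dg (G : SimpleGraph V) (X : Finset V) (v : V) : ℕ := (nb G X v).card

lemma mem_nb {G : SimpleGraph V} {X : Finset V} {v u : V} : u ∈ nb G X v ↔ u ∈ X ∧ G.Adj v u := by
  simp [nb]

lemma nb_subset {G : SimpleGraph V} {X : Finset V} {v : V} : nb G X v ⊆ X := filter_subset _ _

lemma dg_le_card {G : SimpleGraph V} {X : Finset V} {v : V} : dg G X v ≤ X.card :=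
  card_le_card nb_subset

lemma dg_mono {G : SimpleGraph V} {X Y : Finset V} (h : X ⊆ Y) (v : V) : dg G X v ≤ dg G Y v :=
  card_le_card (filter_subset_filter _ h)

lemma dg_split (G : SimpleGraph V) (X Y : Finset V) (v : V) :
    dg G X v = dg G (X ∩ Y) v + dg G (X \ Y) v := by
  unfold dg nb
  rw [← card_union_of_disjoint, ← filter_union]
  · congr 1; ext x; simp; tauto
  · apply disjoint_filter_filter
    exact disjoint_left.2 (by simp; tauto)

lemma dg_add_compl (G : SimpleGraph V) (S : Finset V) (v : V) :
    dg G univ v = dg G S v + dg G Sᶜ v := by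
  rw [dg_split G univ S v]
  simp [compl_eq_univ_sdiff]

lemma sum_dg_comm (G : SimpleGraph V) (X Y : Finset V) :
    ∑ v ∈ X, dg G Y v = ∑ v ∈ Y, dg G X v := by
  have := Finset.sum_card_bipartiteAbove_eq_sum_card_bipartiteBelow (s := X) (t := Y) G.Adj
  simp only [Finset.bipartiteAbove, Finset.bipartiteBelow] at this
  unfold dg nb
  rw [this]
  refine sum_congr rfl fun x _ => ?_
  congr 1
  ext y
  simp [G.adj_comm]

lemma two_edgeCount (G : SimpleGraph V) : 2 * edgeCount G = ∑ v, dg G univ v := by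
  unfold edgeCount
  rw [← G.sum_degrees_eq_twice_card_edges]
  refine sum_congr rfl fun v _ => ?_
  rw [← G.card_neighborFinset_eq_degree]
  unfold dg
  congr 1
  ext u
  simp [nb]

lemma two_edgeCount_split (G : SimpleGraph V) (S : Finset V) : 2 * edgeCount G =
    ∑ v ∈ S, dg G S v + ∑ v ∈ Sᶜ, dg G Sᶜ v + 2 * ∑ v ∈ S, dg G Sᶜ v := by
  rw [two_edgeCount, ← Finset.sum_add_sum_compl S]
  simp only [dg_add_compl G S, sum_add_distrib]
  rw [sum_dg_comm G Sᶜ S]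
  ring

/-- common neighbours of `W` inside `B` -/
noncomputable def cnb (G : SimpleGraph V) (B W : Finset V) : Finset V :=
  B.filter fun w => ∀ u ∈ W, G.Adj u w

lemma mem_cnb {G : SimpleGraph V} {B W : Finset V} {x : V} :
    x ∈ cnb G B W ↔ x ∈ B ∧ ∀ u ∈ W, G.Adj u x := by simp [cnb]

lemma kst (G : SimpleGraph V) (X : Finset V) (k : ℕ) (hk : 1 ≤ k)
    (h : ∀ K ⊆ X, K.card = k → (X.filter fun x => ∀ u ∈ K, G.Adj x u).card ≤ k) :
    (∑ u ∈ X, (dg G X u + 1 - k)) ^ k ≤ X.card ^ (k - 1) * (k.factorial * (k * X.card ^ k)) := by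
  obtain ⟨m, rfl⟩ : ∃ m, k = m + 1 := ⟨k - 1, by omega⟩
  have h1 : (∑ u ∈ X, (dg G X u + 1 - (m+1))) ^ (m+1) ≤
      X.card ^ m * ∑ u ∈ X, (dg G X u + 1 - (m+1)) ^ (m+1) :=
    pow_sum_le_card_mul_sum_pow (fun i _ => Nat.zero_le _) m
  have h2 : ∑ u ∈ X, (dg G X u + 1 - (m+1)) ^ (m+1) ≤
      (m+1).factorial * ∑ u ∈ X, (dg G X u).choose (m+1) := by
    rw [mul_sum]
    refine sum_le_sum fun u _ => ?_
    rw [← Nat.descFactorial_eq_factorial_mul_choose]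
    exact Nat.pow_sub_le_descFactorial _ _
  have h3 : ∑ u ∈ X, (dg G X u).choose (m+1) ≤ (m+1) * X.card ^ (m+1) := by
    have e1 : ∀ u ∈ X, (dg G X u).choose (m+1) =
        ((X.powersetCard (m+1)).filter fun K => ∀ w ∈ K, G.Adj u w).card := by
      intro u _
      rw [dg, ← card_powersetCard]
      congr 1
      ext K
      simp only [mem_powersetCard, mem_filter, nb, subset_iff]
      constructor
      · rintro ⟨a, b⟩
        exact ⟨⟨fun x hx => (a hx).1, b⟩, fun x hx => (a hx).2⟩
      · rintro ⟨⟨a, b⟩, c⟩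
        exact ⟨fun x hx => ⟨a hx, c x hx⟩, b⟩
    rw [sum_congr rfl e1]
    have := Finset.sum_card_bipartiteAbove_eq_sum_card_bipartiteBelow (s := X)
      (t := X.powersetCard (m+1)) (fun u K => ∀ w ∈ K, G.Adj u w)
    simp only [Finset.bipartiteAbove, Finset.bipartiteBelow] at this
    rw [this]
    calc _ ≤ ∑ K ∈ X.powersetCard (m+1), (m+1) := by
          refine sum_le_sum fun K hK => ?_
          rw [mem_powersetCard] at hK
          exact h K hK.1 hK.2
      _ = (X.card.choose (m+1)) * (m+1) := by simp
      _ ≤ (m+1) * X.card ^ (m+1) := by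
          rw [mul_comm]
          exact Nat.mul_le_mul_left _ (Nat.choose_le_pow _ _)
  calc _ ≤ _ := h1
    _ ≤ X.card ^ m * ((m+1).factorial * ((m+1) * X.card ^ (m+1))) := by gcongr; exact h2.trans (by gcongr)

lemma flatten_singletons (l : List V) : (l.map fun x => [x]).flatten = l := by
  induction l with
  | nil => simp
  | cons a l ih => simp [ih]

/-- `K_{1,k,k}` contains the wheel. -/
lemma wheel_of_complete (G : SimpleGraph V) (k : ℕ) (hk : 2 ≤ k) (h : V) (A B : Finset V)
    (hA : A.card = k) (hB : k ≤ B.card) (hhA : ∀ a ∈ A, G.Adj h a) (hhB : ∀ b ∈ B, G.Adj h b)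
    (hAB : ∀ a ∈ A, ∀ b ∈ B, G.Adj a b) : ContainsCopy (wheelGraph (2 * k + 1)) G := by
  obtain ⟨B', hB', hBc⟩ := exists_subset_card_eq hB
  refine wheel_of_blocks G k hk h A.toList (B'.toList.map fun x => [x]) ?_ ?_ (nodup_toList _) ?_
    ?_ ?_ ?_ ?_
  · simp [hA, hBc]
  · rw [flatten_singletons]; simp [hA, hBc]; ring
  · rw [flatten_singletons]; exact nodup_toList _
  · simp
  · rw [flatten_singletons]; simp
    exact fun u hu x hx => hAB u hu x (hB' hx)
  · simpa using hhA
  · rw [flatten_singletons]; simp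
    exact fun x hx => hhB x (hB' hx)

lemma sum_nb_small (k : ℕ) (hk : 2 ≤ k) (γ : ℝ) (hγ : 0 < γ) : ∃ N : ℕ, ∀ (V : Type) [Fintype V]
    (G : SimpleGraph V), N ≤ Fintype.card V → ¬ ContainsCopy (wheelGraph (2 * k + 1)) G → ∀ v,
    (∑ u ∈ nb G univ v, (dg G (nb G univ v) u : ℝ)) ≤ γ * (Fintype.card V : ℝ) ^ 2 := by
  obtain ⟨N1, hN1⟩ := exists_nat_gt (2 * k / γ)
  obtain ⟨N2, hN2⟩ := exists_nat_gt (((k.factorial * k : ℕ) : ℝ) / (γ / 2) ^ k)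
  refine ⟨max (max N1 N2) 1, fun V _ G hn hG v => ?_⟩
  by_contra! hcon
  set X := nb G univ v with hX
  set n := Fintype.card V with hnn
  have hn1 : N1 ≤ n := by omega
  have hn2 : N2 ≤ n := by omega
  have hn0 : 1 ≤ n := by omega
  have hXn : X.card ≤ n := card_le_univ X
  have hkst := kst G X k (by omega) (by
    intro K hK hKc
    by_contra! hc
    refine hG (wheel_of_complete G k hk v K _ hKc hc.le ?_ ?_ ?_)
    · exact fun a ha => (mem_nb.1 (hK ha)).2
    · exact fun b hb => (mem_nb.1 (mem_filter.1 hb).1).2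
    · exact fun a ha b hb => ((mem_filter.1 hb).2 a ha).symm)
  have h2 : (∑ u ∈ X, (dg G X u + 1 - k)) ^ k ≤ n ^ (k - 1) * (k.factorial * (k * n ^ k)) :=
    hkst.trans (by gcongr)
  have hnpos : (0:ℝ) < n := by exact_mod_cast hn0
  have h3 : γ / 2 * (n:ℝ) ^ 2 ≤ ((∑ u ∈ X, (dg G X u + 1 - k) : ℕ) : ℝ) := by
    have e1 : (∑ u ∈ X, (dg G X u : ℝ)) ≤ ((∑ u ∈ X, (dg G X u + 1 - k) : ℕ) : ℝ) + X.card * k := by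
      have : ∑ u ∈ X, dg G X u ≤ ∑ u ∈ X, (dg G X u + 1 - k) + X.card * k := by
        rw [← smul_eq_mul, ← sum_const, ← sum_add_distrib]
        exact sum_le_sum fun u _ => by omega
      exact_mod_cast this
    have e2 : (X.card : ℝ) * k ≤ n * k := by gcongr
    have e3 : 2 * k < γ * n := by
      have : 2 * k / γ < n := hN1.trans_le (by exact_mod_cast hn1)
      rwa [div_lt_iff₀ hγ, mul_comm (n:ℝ)] at this
    nlinarith
  have h4 : (γ / 2 * (n:ℝ) ^ 2) ^ k ≤ (n:ℝ) ^ (k - 1) * (k.factorial * (k * (n:ℝ) ^ k)) := by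
    calc _ ≤ _ := pow_le_pow_left₀ (by positivity) h3 k
      _ ≤ _ := by exact_mod_cast h2
  have h5 : ((k.factorial * k : ℕ) : ℝ) < (γ / 2) ^ k * n := by
    have : ((k.factorial * k : ℕ) : ℝ) / (γ / 2) ^ k < n := hN2.trans_le (by exact_mod_cast hn2)
    rwa [div_lt_iff₀ (by positivity), mul_comm (n:ℝ)] at this
  obtain ⟨m, rfl⟩ : ∃ m, k = m + 1 := ⟨k - 1, by omega⟩
  have h6 : (γ / 2 * (n:ℝ) ^ 2) ^ (m+1) = ((γ / 2) ^ (m+1) * n) * ((n:ℝ)^m * n ^ (m+1)) := by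
    rw [mul_pow]; ring
  rw [h6] at h4
  have h7 : (0:ℝ) < (n:ℝ)^m * n ^ (m+1) := by positivity
  simp only [Nat.add_sub_cancel] at h4
  push_cast at h5 h4
  nlinarith [mul_lt_mul_of_pos_right h5 h7]

end Basic
end OddWheel


namespace OddWheel
open Finset
open scoped Classical

section Clone

/-- delete all edges at `v` and join `v` to the given set -/
def reattach {V : Type*} (G : SimpleGraph V) (v : V) (N' : Finset V) (hv : v ∉ N') :
    SimpleGraph V where
  Adj x y := (x ≠ v ∧ y ≠ v ∧ G.Adj x y) ∨ (x = v ∧ y ∈ N') ∨ (y = v ∧ x ∈ N')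
  symm := by
    constructor
    intro x y h
    rcases h with ⟨a, b, c⟩ | h | h
    · exact Or.inl ⟨b, a, c.symm⟩
    · exact Or.inr (Or.inr h)
    · exact Or.inr (Or.inl h)
  loopless := by
    constructor
    intro x h
    rcases h with ⟨a, b, c⟩ | ⟨h, h'⟩ | ⟨h, h'⟩
    · exact c.ne rfl
    · exact hv (h ▸ h')
    · exact hv (h ▸ h')

lemma clone {n k : ℕ} (G : SimpleGraph (Fin n)) (hG : IsExWheel (2 * k + 1) G) (v : Fin n)
    (W N' : Finset (Fin n)) (hW : 2 * k + 2 ≤ W.card) (hv : v ∉ N')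
    (h : ∀ u ∈ W, ∀ w ∈ N', G.Adj u w) : N'.card ≤ dg G univ v := by
  have hfree : WheelFree (2 * k + 1) (reattach G v N' hv) := by
    rintro ⟨f, hf⟩
    apply hG.1
    by_cases hvf : ∃ a, f a = v
    · obtain ⟨a, ha⟩ := hvf
      obtain ⟨u, huW, hu⟩ : ∃ u ∈ W, u ∉ univ.map f := by
        by_contra! hc
        have := card_le_card (show W ⊆ univ.map f from hc)
        rw [card_map, card_univ, Fintype.card_fin] at this
        omega
      have hu' : ∀ b, f b ≠ u := fun b hb => hu (by simp [← hb])
      have hsw : ∀ b, b ≠ a → Equiv.swap v u (f b) = f b := fun b hb =>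
        Equiv.swap_apply_of_ne_of_ne (fun h => hb (f.injective (h.trans ha.symm))) (hu' b)
      have hsa : Equiv.swap v u (f a) = u := by rw [ha, Equiv.swap_apply_left]
      refine ⟨f.trans (Equiv.swap v u).toEmbedding, fun x y hxy => ?_⟩
      simp only [Function.Embedding.trans_apply, Equiv.coe_toEmbedding]
      have hadj := hf x y hxy
      have hne : x ≠ y := hxy.ne
      by_cases hx : x = a
      · have hy : y ≠ a := fun hy => hne (hx.trans hy.symm)
        rw [hsw y hy, hx, hsa]
        rcases hadj with ⟨h1, _⟩ | ⟨_, h1⟩ | ⟨h1, _⟩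
        · exact absurd (by rw [hx, ha]) h1
        · exact h u huW _ h1
        · exact absurd (f.injective (h1.trans ha.symm)) hy
      · rw [hsw x hx]
        by_cases hy : y = a
        · rw [hy, hsa]
          rcases hadj with ⟨_, h1, _⟩ | ⟨h1, _⟩ | ⟨_, h1⟩
          · exact absurd (by rw [hy, ha]) h1
          · exact absurd (f.injective (h1.trans ha.symm)) hx
          · exact (h u huW _ h1).symm
        · rw [hsw y hy]
          rcases hadj with ⟨_, _, h1⟩ | ⟨h1, _⟩ | ⟨h1, _⟩
          · exact h1
          · exact absurd (f.injective (h1.trans ha.symm)) hx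
          · exact absurd (f.injective (h1.trans ha.symm)) hy
    · push Not at hvf
      refine ⟨f, fun x y hxy => ?_⟩
      rcases hf x y hxy with ⟨_, _, h1⟩ | ⟨h1, _⟩ | ⟨h1, _⟩
      · exact h1
      · exact absurd h1 (hvf x)
      · exact absurd h1 (hvf y)
  have hle := hG.2 _ hfree
  have e1 := two_edgeCount_split G {v}
  have e2 := two_edgeCount_split (reattach G v N' hv) {v}
  have s1 : ∀ H : SimpleGraph (Fin n), dg H {v} v = 0 := by
    intro H
    rw [dg, card_eq_zero]
    ext x
    simp only [mem_nb, mem_singleton, notMem_empty, iff_false, not_and]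
    rintro rfl h
    exact h.ne rfl
  have s2 : ∑ x ∈ ({v} : Finset (Fin n))ᶜ, dg (reattach G v N' hv) {v}ᶜ x =
      ∑ x ∈ ({v} : Finset (Fin n))ᶜ, dg G {v}ᶜ x := by
    refine sum_congr rfl fun x hx => ?_
    unfold dg
    congr 1
    ext y
    simp only [mem_nb, mem_compl, mem_singleton] at hx ⊢
    simp only [reattach]
    tauto
  have s3 : dg (reattach G v N' hv) {v}ᶜ v = N'.card := by
    unfold dg
    congr 1
    ext y
    simp only [mem_nb, mem_compl, mem_singleton, reattach]
    constructor
    · rintro ⟨h1, h2⟩; tauto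
    · intro hy
      exact ⟨fun h => hv (h ▸ hy), Or.inr (Or.inl ⟨trivial, hy⟩)⟩
  have s4 := dg_add_compl G {v} v
  rw [s1 G] at s4
  simp only [sum_singleton, s1, s2, s3] at e1 e2
  omega

end Clone

section Stab
variable {V : Type*} [Fintype V] [DecidableEq V]
set_option linter.unusedSectionVars false

lemma common_nb (G : SimpleGraph V) (B : Finset V) (W : Finset V) :
    B.card ≤ (cnb G B W).card + ∑ u ∈ W, (B.card - dg G B u) := by
  have h1 : B ⊆ (cnb G B W) ∪
      W.biUnion (fun u => B.filter fun w => ¬ G.Adj u w) := by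
    intro w hw
    simp only [mem_union, mem_cnb, mem_filter, mem_biUnion]
    by_cases h : ∀ u ∈ W, G.Adj u w
    · exact Or.inl ⟨hw, h⟩
    · push Not at h
      obtain ⟨u, hu, hu'⟩ := h
      exact Or.inr ⟨u, hu, hw, hu'⟩
  refine (card_le_card h1).trans ((card_union_le _ _).trans ?_)
  gcongr
  refine card_biUnion_le.trans (sum_le_sum fun u _ => ?_)
  have := card_filter_add_card_filter_not (s := B) (fun w => G.Adj u w)
  have h2 : dg G B u = (B.filter fun w => G.Adj u w).card := rfl
  omega

lemma min_deg {n k : ℕ} (G : SimpleGraph (Fin n)) (hG : IsExWheel (2 * k + 1) G)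
    (A B : Finset (Fin n)) (M θ : ℝ) (hθ : 0 < θ)
    (hM : ∑ u ∈ A, ((B.card : ℝ) - dg G B u) ≤ M) (hA : 2 * k + 2 + M / θ ≤ A.card) (v : Fin n) :
    (B.card : ℝ) - (2 * k + 2) * θ - 1 ≤ dg G univ v := by
  set A' := A.filter fun u => (B.card : ℝ) - dg G B u ≤ θ with hA'
  have hnn : ∀ u, (0:ℝ) ≤ (B.card : ℝ) - dg G B u := fun u => by
    have : dg G B u ≤ B.card := dg_le_card
    rw [sub_nonneg]; exact_mod_cast this
  have hbad : ((A.filter fun u => ¬ ((B.card : ℝ) - dg G B u ≤ θ)).card : ℝ) * θ ≤ M := by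
    calc _ = ∑ u ∈ A.filter fun u => ¬ ((B.card : ℝ) - dg G B u ≤ θ), θ := by simp
      _ ≤ ∑ u ∈ A.filter fun u => ¬ ((B.card : ℝ) - dg G B u ≤ θ), ((B.card : ℝ) - dg G B u) := by
        refine sum_le_sum fun u hu => ?_
        have := (mem_filter.1 hu).2
        linarith
      _ ≤ ∑ u ∈ A, ((B.card : ℝ) - dg G B u) :=
        sum_le_sum_of_subset_of_nonneg (filter_subset _ _) fun u _ _ => hnn u
      _ ≤ M := hM
  have hbad' := (le_div_iff₀ hθ).2 hbad
  have hsplit := card_filter_add_card_filter_not (s := A) (fun u => (B.card : ℝ) - dg G B u ≤ θ)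
  have hcard : 2 * k + 2 ≤ A'.card := by
    have h1 : ((A'.card : ℝ)) + ((A.filter fun u => ¬ ((B.card : ℝ) - dg G B u ≤ θ)).card : ℝ)
        = A.card := by rw [← hsplit, Nat.cast_add]
    have : ((2 * k + 2 : ℕ) : ℝ) ≤ A'.card := by push_cast; linarith
    exact_mod_cast this
  obtain ⟨W, hWA, hWc⟩ := exists_subset_card_eq hcard
  have hcl := clone G hG v W ((cnb G B W).erase v) hWc.ge (by simp)
    (fun u hu w hw => (mem_cnb.1 (mem_erase.1 hw).2).2 u hu)
  have h1 := common_nb G B W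
  have h2 : ((∑ u ∈ W, (B.card - dg G B u) : ℕ) : ℝ) ≤ (2 * k + 2) * θ := by
    push_cast
    calc _ ≤ ∑ u ∈ W, θ := by
          refine sum_le_sum fun u hu => ?_
          rw [Nat.cast_sub dg_le_card]
          exact (mem_filter.1 (hWA hu)).2
      _ = _ := by simp [hWc]
  have h3 := pred_card_le_card_erase (s := cnb G B W) (a := v)
  have h4 : B.card ≤ dg G univ v + 1 + ∑ u ∈ W, (B.card - dg G B u) := by omega
  have h5 : (B.card : ℝ) ≤ dg G univ v + 1 + ((∑ u ∈ W, (B.card - dg G B u) : ℕ) : ℝ) := by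
    exact_mod_cast h4
  linarith

lemma sum_miss (G : SimpleGraph V) (A B : Finset V) :
    ∑ u ∈ A, ((B.card : ℝ) - dg G B u) = A.card * B.card - ((∑ u ∈ A, dg G B u : ℕ) : ℝ) := by
  rw [sum_sub_distrib]; simp

/-- product of the two partial degrees is at most edges in the neighbourhood plus missing pairs -/
lemma deg_prod (G : SimpleGraph V) (A B : Finset V) (v : V) :
    (dg G A v : ℝ) * dg G B v ≤ (∑ u ∈ nb G univ v, (dg G (nb G univ v) u : ℝ)) +
      ∑ u ∈ A, ((B.card : ℝ) - dg G B u) := by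
  have hnn : ∀ u, (0:ℝ) ≤ (B.card : ℝ) - dg G B u := fun u => by
    have : dg G B u ≤ B.card := dg_le_card
    rw [sub_nonneg]; exact_mod_cast this
  have hsub : ∀ X : Finset V, nb G X v ⊆ nb G univ v := fun X => 
    filter_subset_filter _ (subset_univ _)
  have h1 : ∑ u ∈ nb G A v, ((dg G B v : ℝ) - ((B.card : ℝ) - dg G B u)) ≤ 
      ∑ u ∈ nb G A v, (dg G (nb G univ v) u : ℝ) := by
    refine sum_le_sum fun u _ => ?_
    have e1 : dg G (nb G B v) u ≤ dg G (nb G univ v) u := dg_mono (hsub B) u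
    have e2 := dg_split G B (nb G B v) u
    have e3 : dg G (B \ nb G B v) u ≤ (B \ nb G B v).card := dg_le_card
    have e4 := card_sdiff_add_card_eq_card (nb_subset (G := G) (X := B) (v := v))
    have e5 : B ∩ nb G B v = nb G B v := inter_eq_right.2 nb_subset
    rw [e5] at e2
    have e6 : dg G B v = (nb G B v).card := rfl
    have : dg G B v + dg G B u ≤ dg G (nb G univ v) u + B.card := by omega
    have : (dg G B v : ℝ) + dg G B u ≤ dg G (nb G univ v) u + B.card := by exact_mod_cast this
    linarith
  have h2 : ∑ u ∈ nb G A v, (dg G (nb G univ v) u : ℝ) ≤ 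
      ∑ u ∈ nb G univ v, (dg G (nb G univ v) u : ℝ) :=
    sum_le_sum_of_subset_of_nonneg (hsub A) fun u _ _ => Nat.cast_nonneg _
  have h3 : ∑ u ∈ nb G A v, ((B.card : ℝ) - dg G B u) ≤ ∑ u ∈ A, ((B.card : ℝ) - dg G B u) :=
    sum_le_sum_of_subset_of_nonneg nb_subset fun u _ _ => hnn u
  rw [sum_sub_distrib] at h1
  have h4 : ∑ u ∈ nb G A v, (dg G B v : ℝ) = (dg G A v : ℝ) * dg G B v := by
    simp [dg]
  linarith

end Stab
end OddWheel


namespace OddWheel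
open Finset
open scoped Classical

set_option maxHeartbeats 2000000 in
lemma stab (k : ℕ) (hk : 2 ≤ k) (κ : ℝ) (hκ : 0 < κ) : ∃ N : ℕ, ∀ n : ℕ, N ≤ n →
    ∀ G : SimpleGraph (Fin n), IsExWheel (2 * k + 1) G → n ^ 2 ≤ 4 * edgeCount G →
    ∃ S : Finset (Fin n), (∀ v ∈ S, (Sᶜ.card : ℝ) - dg G Sᶜ v ≤ κ * n) ∧
      (∀ v ∈ Sᶜ, (S.card : ℝ) - dg G S v ≤ κ * n) ∧
      |(S.card : ℝ) - n / 2| ≤ κ * n := by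
  set δ : ℝ := min (κ / (2 * k + 8)) (1 / (16 * (k + 2))) with hδ
  have hkr : (2:ℝ) ≤ k := by exact_mod_cast hk
  have hδ0 : 0 < δ := by rw [hδ]; positivity
  have hδ1 : (2 * k + 8) * δ ≤ κ := by
    have h1 : δ ≤ κ / (2 * k + 8) := min_le_left _ _
    rw [le_div_iff₀ (by positivity)] at h1
    linarith
  have hδ2 : 16 * (k + 2) * δ ≤ 1 := by
    have h1 : δ ≤ 1 / (16 * (k + 2)) := min_le_right _ _
    rw [le_div_iff₀ (by positivity)] at h1
    linarith
  have hδ3 : 64 * δ ≤ 1 := by nlinarith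
  obtain ⟨N0, hN0⟩ := sum_nb_small k hk (δ ^ 2) (by positivity)
  obtain ⟨N1, hN1⟩ := exists_nat_gt (1 / δ)
  refine ⟨max (max N0 N1) (8 * (2 * k + 2)), fun n hn G hG hE => ?_⟩
  have hn0 : N0 ≤ n := by omega
  have hn1 : 1 ≤ δ * n := by
    have : (N1 : ℝ) ≤ n := by exact_mod_cast (show N1 ≤ n by omega)
    have h2 := hN1.trans_le this
    rw [div_lt_iff₀ hδ0] at h2
    linarith
  have hn2 : (8 * (2 * k + 2) : ℝ) ≤ n := by exact_mod_cast (show 8 * (2 * k + 2) ≤ n by omega)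
  have hnpos : (0:ℝ) < n := by linarith
  have hnb := hN0 (Fin n) G (by simpa using hn0) hG.1
  simp only [Fintype.card_fin] at hnb
  have hne : (univ : Finset (Fin n)).Nonempty := by
    rw [← card_pos, card_univ, Fintype.card_fin]
    exact_mod_cast hnpos
  obtain ⟨v0, -, hv0⟩ := exists_max_image univ (fun v => dg G univ v) hne
  set A := nb G univ v0 with hA
  set B := Aᶜ with hB
  have hab : (A.card : ℝ) + B.card = n := by
    have := card_add_card_compl A
    rw [Fintype.card_fin] at this
    exact_mod_cast this
  set a : ℝ := (A.card : ℝ) with ha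
  set b : ℝ := (B.card : ℝ) with hb
  set α : ℝ := ∑ u ∈ A, (dg G A u : ℝ) with hα
  set β : ℝ := ∑ u ∈ B, (dg G B u : ℝ) with hβ
  set c : ℝ := ∑ u ∈ A, (dg G B u : ℝ) with hc
  have h1 : α + β + 2 * c ≥ n ^ 2 / 2 := by
    have e := two_edgeCount_split G A
    have e' : 2 * (edgeCount G : ℝ) = α + β + 2 * c := by
      rw [hα, hβ, hc]; exact_mod_cast e
    have : (n:ℝ) ^ 2 ≤ 4 * edgeCount G := by exact_mod_cast hE
    linarith
  have h2 : c + β ≤ a * b := by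
    have e1 : c = ∑ u ∈ B, (dg G A u : ℝ) := by
      rw [hc]; exact_mod_cast sum_dg_comm G A B
    rw [e1, hβ, ← sum_add_distrib]
    calc _ ≤ ∑ u ∈ B, a := by
          refine sum_le_sum fun u _ => ?_
          have := hv0 u (mem_univ u)
          rw [dg_add_compl G A u] at this
          rw [ha]
          exact_mod_cast this
      _ = _ := by simp [hb]; ring
  have h3 : α ≤ δ ^ 2 * n ^ 2 := hnb v0
  have h4 : a * b ≤ n ^ 2 / 4 := by rw [← hab]; nlinarith [sq_nonneg (a - b)]
  have h5 : a * b - c ≤ δ ^ 2 * n ^ 2 := by linarith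
  have h6 : β ≤ δ ^ 2 * n ^ 2 := by linarith
  have h7 : (a - b) ^ 2 ≤ (2 * δ * n) ^ 2 := by
    have : β ≥ 0 := sum_nonneg fun _ _ => Nat.cast_nonneg _
    have e : (a - b) ^ 2 = (a + b) ^ 2 - 4 * (a * b) := by ring
    rw [e, hab]
    nlinarith
  have h8 := abs_le_of_sq_le_sq h7 (by positivity)
  rw [abs_le] at h8
  have hmiss : ∑ u ∈ A, ((B.card : ℝ) - dg G B u) ≤ δ ^ 2 * n ^ 2 := by
    rw [sum_miss]
    push_cast
    exact h5
  have hdeg : ∀ v, (n : ℝ) / 2 - (2 * k + 4) * (δ * n) ≤ dg G univ v := by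
    intro v
    have := min_deg G hG A B (δ ^ 2 * n ^ 2) (δ * n) (by positivity) hmiss (by
      have : δ ^ 2 * (n:ℝ) ^ 2 / (δ * n) = δ * n := by field_simp
      rw [this, ← ha]
      nlinarith) v
    rw [← hb] at this
    nlinarith
  have hdeg' : ∀ v, (n : ℝ) / 4 ≤ dg G univ v := by
    intro v
    refine le_trans ?_ (hdeg v)
    nlinarith
  have hdsum : ∀ v, (dg G univ v : ℝ) = dg G A v + dg G B v := by
    intro v
    exact_mod_cast dg_add_compl G A v
  have hprod : ∀ v, (dg G A v : ℝ) * dg G B v ≤ 2 * (δ * n) ^ 2 := by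
    intro v
    refine (deg_prod G A B v).trans ?_
    have := hnb v
    nlinarith
  have hmin : ∀ x y : ℝ, 0 ≤ x → x ≤ y → n / 4 ≤ x + y → x * y ≤ 2 * (δ * n) ^ 2 → x ≤ δ * n := by
    intro x y hx hxy hs hp
    by_contra! hcon
    have : n / 8 ≤ y := by linarith
    have : δ * n * (n / 8) < x * y := by
      apply mul_lt_mul hcon this (by positivity) hx
    nlinarith [mul_nonneg (mul_pos hδ0 (mul_pos hnpos hnpos)).le (sub_nonneg.2 hδ3), mul_pos hδ0 (mul_pos hnpos hnpos)]
  set S := univ.filter fun v => dg G A v ≤ dg G B v with hS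
  have hS1 : ∀ v ∈ S, (dg G A v : ℝ) ≤ δ * n := by
    intro v hv
    have hv : dg G A v ≤ dg G B v := by simpa [hS] using hv
    exact hmin _ _ (Nat.cast_nonneg _) (by exact_mod_cast hv) (by rw [← hdsum]; exact hdeg' v)
      (hprod v)
  have hS2 : ∀ v ∈ Sᶜ, (dg G B v : ℝ) ≤ δ * n := by
    intro v hv
    have hv : dg G B v < dg G A v := by simpa [hS] using hv
    exact hmin _ (dg G A v : ℝ) (Nat.cast_nonneg _) (by exact_mod_cast hv.le)
      (by rw [add_comm, ← hdsum]; exact hdeg' v) (by rw [mul_comm]; exact hprod v)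
  have hcount : ∀ X Y : Finset (Fin n), (∑ u ∈ Y, (dg G Y u : ℝ)) ≤ δ ^ 2 * n ^ 2 →
      (∀ v ∈ X, (n:ℝ) / 8 ≤ dg G Y v) → ((X ∩ Y).card : ℝ) ≤ δ * n := by
    intro X Y hY hX
    have e1 : ((X ∩ Y).card : ℝ) * (n / 8) ≤ ∑ u ∈ Y, (dg G Y u : ℝ) := by
      calc _ = ∑ u ∈ X ∩ Y, ((n:ℝ) / 8) := by simp
        _ ≤ ∑ u ∈ X ∩ Y, (dg G Y u : ℝ) := sum_le_sum fun u hu => hX u (mem_inter.1 hu).1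
        _ ≤ _ := sum_le_sum_of_subset_of_nonneg inter_subset_right fun _ _ _ => Nat.cast_nonneg _
    by_contra! hcon
    have : δ * n * (n / 8) < ((X ∩ Y).card : ℝ) * (n / 8) := by
      apply mul_lt_mul_of_pos_right hcon; positivity
    nlinarith [mul_nonneg (mul_pos hδ0 (mul_pos hnpos hnpos)).le (sub_nonneg.2 hδ3), mul_pos hδ0 (mul_pos hnpos hnpos)]
  have hSB : ((S ∩ B).card : ℝ) ≤ δ * n := by
    apply hcount S B h6
    intro v hv
    have := hS1 v hv
    have := hdeg' v
    rw [hdsum] at this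
    nlinarith
  have hTA : ((Sᶜ ∩ A).card : ℝ) ≤ δ * n := by
    apply hcount Sᶜ A h3
    intro v hv
    have := hS2 v hv
    have := hdeg' v
    rw [hdsum] at this
    nlinarith
  have hTcard : (Sᶜ.card : ℝ) ≤ b + δ * n := by
    have : Sᶜ.card ≤ B.card + (Sᶜ ∩ A).card := by
      refine (card_le_card ?_).trans (card_union_le _ _)
      intro x hx
      by_cases h : x ∈ A <;> simp [hB, h] at hx ⊢
      exact hx
    have : (Sᶜ.card : ℝ) ≤ B.card + (Sᶜ ∩ A).card := by exact_mod_cast this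
    linarith
  have hScard : (S.card : ℝ) ≤ a + δ * n := by
    have : S.card ≤ A.card + (S ∩ B).card := by
      refine (card_le_card ?_).trans (card_union_le _ _)
      intro x hx
      by_cases h : x ∈ A
      · exact mem_union_left _ h
      · exact mem_union_right _ (mem_inter.2 ⟨hx, by simpa [hB] using h⟩)
    have : (S.card : ℝ) ≤ A.card + (S ∩ B).card := by exact_mod_cast this
    linarith
  have hSsum : (S.card : ℝ) + Sᶜ.card = n := by
    have := card_add_card_compl S
    rw [Fintype.card_fin] at this
    exact_mod_cast this
  have hκn : (2 * k + 8) * (δ * n) ≤ κ * n := by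
    rw [← mul_assoc]; exact mul_le_mul_of_nonneg_right hδ1 hnpos.le
  have hδn : 0 ≤ δ * n := by positivity
  have hkδ : 0 ≤ k * (δ * n) := by positivity
  refine ⟨S, ?_, ?_, ?_⟩
  · intro v hv
    have e1 := dg_split G B Sᶜ v
    have e2 : dg G (B ∩ Sᶜ) v ≤ dg G Sᶜ v := dg_mono inter_subset_right v
    have e3 : dg G (B \ Sᶜ) v ≤ (S ∩ B).card := by
      refine dg_le_card.trans (card_le_card ?_)
      intro x hx
      simp at hx ⊢
      tauto
    have e4 : (dg G B v : ℝ) ≤ dg G Sᶜ v + (S ∩ B).card := by exact_mod_cast (by omega)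
    have e5 := hdeg v
    rw [hdsum] at e5
    have := hS1 v hv
    linarith
  · intro v hv
    have e1 := dg_split G A S v
    have e2 : dg G (A ∩ S) v ≤ dg G S v := dg_mono inter_subset_right v
    have e3 : dg G (A \ S) v ≤ (Sᶜ ∩ A).card := by
      refine dg_le_card.trans (card_le_card ?_)
      intro x hx
      simp at hx ⊢
      tauto
    have e4 : (dg G A v : ℝ) ≤ dg G S v + (Sᶜ ∩ A).card := by exact_mod_cast (by omega)
    have e5 := hdeg v
    rw [hdsum] at e5
    have := hS2 v hv
    linarith
  · rw [abs_le]
    constructor <;> linarith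

end OddWheel


namespace OddWheel
open Finset
open scoped Classical
set_option linter.unusedSectionVars false
set_option linter.unusedVariables false

variable {V : Type*} [Fintype V] [DecidableEq V]

lemma sum_miss_le (G : SimpleGraph V) (T W : Finset V) (μ : ℕ) (h : ∀ u ∈ W, T.card ≤ dg G T u + μ) :
    T.card ≤ (cnb G T W).card + W.card * μ := by
  refine (common_nb G T W).trans ?_
  have : ∑ u ∈ W, (T.card - dg G T u) ≤ ∑ u ∈ W, μ :=
    sum_le_sum fun u hu => by have := h u hu; omega
  simp at this
  omega

lemma inner_deg (G : SimpleGraph V) (k : ℕ) (hk : 2 ≤ k) (hG : ¬ ContainsCopy (wheelGraph (2 * k + 1)) G)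
    (S T : Finset V) (μ : ℕ) (h : ∀ u ∈ S, T.card ≤ dg G T u + μ) (hT : (k + 1) * μ + k ≤ T.card)
    (v : V) (hv : v ∈ S) : dg G S v ≤ k - 1 := by
  by_contra! hcon
  obtain ⟨U, hU, hUc⟩ := exists_subset_card_eq (show k ≤ (nb G S v).card by unfold dg at hcon; omega)
  apply hG
  have hUS : ∀ u ∈ U, u ∈ S ∧ G.Adj v u := fun u hu => mem_nb.1 (hU hu)
  refine wheel_of_complete G k hk v U (cnb G T (insert v U)) hUc ?_ (fun a ha => (hUS a ha).2) ?_ ?_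
  · have h1 := sum_miss_le G T (insert v U) μ (by
      intro u hu
      rcases mem_insert.1 hu with rfl | hu
      · exact h _ hv
      · exact h _ (hUS u hu).1)
    have h2 : (insert v U).card ≤ k + 1 := by
      have := card_insert_le v U
      omega
    have := Nat.mul_le_mul_right μ h2
    omega
  · intro b hb
    exact (mem_cnb.1 hb).2 v (mem_insert_self _ _)
  · intro a ha b hb
    exact (mem_cnb.1 hb).2 a (mem_insert_of_mem ha)

/-- assembling a wheel from a hub in `S` -/
lemma wheel_hub (G : SimpleGraph V) (k : ℕ) (hk : 2 ≤ k) (S T : Finset V) (C1 F0 : ℕ)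
    (hmiss : ∀ u ∈ S, T.card ≤ dg G T u + C1) (v : V) (hv : v ∈ S) (i : ℕ) (hi : i ≤ k)
    (U : Finset V) (hU : U ⊆ nb G S v) (hUc : U.card = i) (P0 : List (List V)) (R : List ℕ)
    (hlen : P0.length + R.length = i) (hsum : i + P0.flatten.length + R.sum = 2 * k)
    (hP0n : P0.flatten.Nodup) (hP0 : ∀ p ∈ P0, p ≠ [] ∧ p.IsChain G.Adj)
    (hP0a : ∀ u ∈ insert v U, ∀ x ∈ P0.flatten, G.Adj u x)
    (hR : ∀ r ∈ R, 1 ≤ r ∧ HasPaths G T F0 r) (hF : (k + 1) * C1 + 2 * k ≤ F0) :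
    ContainsCopy (wheelGraph (2 * k + 1)) G := by
  have hUS : ∀ u ∈ U, u ∈ S ∧ G.Adj v u := fun u hu => mem_nb.1 (hU hu)
  set F := (T \ cnb G T (insert v U)) ∪ P0.flatten.toFinset with hFdef
  have hFc : F.card + R.sum ≤ F0 := by
    have h1 := sum_miss_le G T (insert v U) C1 (by
      intro u hu
      rcases mem_insert.1 hu with rfl | hu
      · exact hmiss _ hv
      · exact hmiss _ (hUS u hu).1)
    have h2 : (insert v U).card ≤ k + 1 := by
      have := card_insert_le v U
      omega
    have h3 := Nat.mul_le_mul_right C1 h2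
    have h4 : (T \ cnb G T (insert v U)).card = T.card - (cnb G T (insert v U)).card :=
      card_sdiff_of_subset fun x hx => (mem_cnb.1 hx).1
    have h5 : F.card ≤ (T \ cnb G T (insert v U)).card + P0.flatten.toFinset.card := card_union_le _ _
    have h6 := P0.flatten.toFinset_card_le
    omega
  obtain ⟨P, hPl, hPs, hPn, hPc, hPF⟩ := pieces_exist G T F0 R hR F hFc
  have hadj : ∀ u ∈ insert v U, ∀ x ∈ (P0 ++ P).flatten, G.Adj u x := by
    intro u hu x hx
    rw [List.flatten_append, List.mem_append] at hx
    rcases hx with hx | hx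
    · exact hP0a u hu x hx
    · obtain ⟨hxT, hxF⟩ := hPF x hx
      have : x ∈ cnb G T (insert v U) := by
        by_contra hc
        exact hxF (mem_union_left _ (mem_sdiff.2 ⟨hxT, hc⟩))
      exact (mem_cnb.1 this).2 u hu
  refine wheel_of_blocks G k hk v U.toList (P0 ++ P) ?_ ?_ (nodup_toList _) ?_ ?_ ?_ ?_ ?_
  · simp [hUc, hPl]; omega
  · simp only [List.flatten_append, List.length_append, length_toList, hUc, hPs]; omega
  · rw [List.flatten_append, List.nodup_append']
    refine ⟨hP0n, hPn, ?_⟩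
    intro x hx hx'
    exact (hPF x hx').2 (mem_union_right _ (by simpa using hx))
  · intro p hp
    rcases List.mem_append.1 hp with h | h
    · exact hP0 p h
    · exact hPc p h
  · intro u hu x hx
    exact hadj u (mem_insert_of_mem (by simpa using hu)) x hx
  · intro u hu
    exact (hUS u (by simpa using hu)).2
  · intro x hx
    exact hadj v (mem_insert_self _ _) x hx

lemma hasPaths_one (G : SimpleGraph V) (T : Finset V) (F0 : ℕ) (h : F0 < T.card) :
    HasPaths G T F0 1 := by
  intro F hF
  obtain ⟨x, hx, hxF⟩ := exists_mem_notMem_of_card_lt_card (hF.trans_lt h)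
  exact ⟨[x], by simp, by simp, by simp, by simpa using hx, by simpa using hxF⟩

/-- vertices of `T` in `F` or adjacent (in `T`) to `F` -/
noncomputable def clos (G : SimpleGraph V) (T F : Finset V) : Finset V := F ∪ F.biUnion fun u => nb G T u

lemma clos_card (G : SimpleGraph V) (T F : Finset V) (k : ℕ) (hk : 1 ≤ k) (hF : ∀ u ∈ F, dg G T u ≤ k - 1) :
    (clos G T F).card ≤ k * F.card := by
  unfold clos
  refine (card_union_le _ _).trans ?_
  have : (F.biUnion fun u => nb G T u).card ≤ F.card * (k - 1) := card_biUnion_le_card_mul _ _ _ hF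
  obtain ⟨m, rfl⟩ : ∃ m, k = m + 1 := ⟨k - 1, by omega⟩
  simp at this
  nlinarith

lemma clos_adj {G : SimpleGraph V} {T F : Finset V} {x y : V} (hx : x ∉ clos G T F) (hxT : x ∈ T)
    (h : G.Adj x y) : y ∉ F := by
  intro hy
  apply hx
  unfold clos
  exact mem_union_right _ (mem_biUnion.2 ⟨y, hy, mem_nb.2 ⟨hxT, h.symm⟩⟩)

lemma clos_self {G : SimpleGraph V} {T F : Finset V} {x : V} (hx : x ∉ clos G T F) : x ∉ F :=
  fun h => hx (mem_union_left _ h)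

/-- the vertices of large inner degree -/
noncomputable def big (G : SimpleGraph V) (T : Finset V) (d : ℕ) : Finset V := T.filter fun u => d ≤ dg G T u

lemma mem_big {G : SimpleGraph V} {T : Finset V} {d : ℕ} {x : V} :
    x ∈ big G T d ↔ x ∈ T ∧ d ≤ dg G T x := by simp [big]

/-- choose a vertex outside of the closure of `F` -/
lemma big_avoid (G : SimpleGraph V) (T : Finset V) (k F0 d : ℕ) (hk : 1 ≤ k)
    (hT : ∀ u ∈ T, dg G T u ≤ k - 1) (h : k * F0 < (big G T d).card) (F : Finset V)
    (hF : F.card ≤ F0) : ∃ u ∈ big G T d, u ∉ clos G T (F ∩ T) := by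
  have h1 : (clos G T (F ∩ T)).card ≤ k * (F ∩ T).card :=
    clos_card G T _ k hk fun u hu => hT u (mem_inter.1 hu).2
  have h2 : (F ∩ T).card ≤ F0 := (card_le_card inter_subset_left).trans hF
  exact exists_mem_notMem_of_card_lt_card (by nlinarith)

lemma hasPaths_two (G : SimpleGraph V) (T : Finset V) (k F0 : ℕ) (hk : 1 ≤ k)
    (hT : ∀ u ∈ T, dg G T u ≤ k - 1) (h : k * F0 < (big G T 1).card) : HasPaths G T F0 2 := by
  intro F hF
  obtain ⟨u, hu, huF⟩ := big_avoid G T k F0 1 hk hT h F hF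
  rw [mem_big] at hu
  obtain ⟨w, hw⟩ : (nb G T u).Nonempty := card_pos.1 hu.2
  rw [mem_nb] at hw
  have huF' := clos_self huF
  have hwF' := clos_adj huF hu.1 hw.2
  rw [mem_inter] at huF' hwF'
  refine ⟨[u, w], by simp, by simpa using hw.2.ne, by simpa using hw.2, ?_, ?_⟩
  · simp; tauto
  · simp; tauto

lemma hasPaths_three (G : SimpleGraph V) (T : Finset V) (k F0 : ℕ) (hk : 1 ≤ k)
    (hT : ∀ u ∈ T, dg G T u ≤ k - 1) (h : k * F0 < (big G T 2).card) : HasPaths G T F0 3 := by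
  intro F hF
  obtain ⟨u, hu, huF⟩ := big_avoid G T k F0 2 hk hT h F hF
  rw [mem_big] at hu
  obtain ⟨w, z, hw, hz, hwz⟩ := one_lt_card_iff.1 (show 1 < (nb G T u).card from hu.2)
  rw [mem_nb] at hw hz
  have huF' := clos_self huF
  have hwF' := clos_adj huF hu.1 hw.2
  have hzF' := clos_adj huF hu.1 hz.2
  rw [mem_inter] at huF' hwF' hzF'
  refine ⟨[w, u, z], by simp, ?_, ?_, ?_, ?_⟩
  · simp [hwz, hw.2.ne', hz.2.ne]
  · simp [hw.2.symm, hz.2]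
  · simp; tauto
  · simp; tauto

lemma hasPaths_four (G : SimpleGraph V) (T : Finset V) (k F0 L : ℕ) (hk : 1 ≤ k)
    (hT : ∀ u ∈ T, dg G T u ≤ k - 1) (hL : (T \ big G T 3).card ≤ L)
    (h : k * (k * F0) + k * L < T.card) : HasPaths G T F0 4 := by
  intro F hF
  set F1 := clos G T (F ∩ T) ∩ T with hF1
  set F2 := clos G T F1 with hF2
  set L2 := clos G T (T \ big G T 3) with hL2
  have c1 : F1.card ≤ k * F0 := by
    refine (card_le_card inter_subset_left).trans ?_
    refine (clos_card G T _ k hk fun u hu => hT u (mem_inter.1 hu).2).trans ?_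
    exact Nat.mul_le_mul_left _ ((card_le_card inter_subset_left).trans hF)
  have c2 : F2.card ≤ k * (k * F0) :=
    (clos_card G T _ k hk fun u hu => hT u (mem_inter.1 hu).2).trans (Nat.mul_le_mul_left _ c1)
  have c3 : L2.card ≤ k * L :=
    (clos_card G T _ k hk fun u hu => hT u (mem_sdiff.1 hu).1).trans (Nat.mul_le_mul_left _ hL)
  obtain ⟨t1, ht1, hn1⟩ := exists_mem_notMem_of_card_lt_card
    (lt_of_le_of_lt (card_union_le F2 L2) (show _ < T.card by omega))
  rw [mem_union, not_or] at hn1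
  obtain ⟨hnF, hnL⟩ := hn1
  have key : ∀ x ∈ T, x ∉ T \ big G T 3 → 3 ≤ dg G T x := by
    intro x hx h
    by_contra hc
    exact h (mem_sdiff.2 ⟨hx, fun hb => hc (mem_big.1 hb).2⟩)
  have d1 : 3 ≤ dg G T t1 := key t1 ht1 (clos_self hnL)
  have e1 : t1 ∉ clos G T (F ∩ T) := fun h => (clos_self hnF) (mem_inter.2 ⟨h, ht1⟩)
  obtain ⟨t2, t0, h2, h0, h20⟩ := one_lt_card_iff.1 (show 1 < (nb G T t1).card from (by unfold dg at d1; omega))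
  rw [mem_nb] at h2 h0
  have d2 : 3 ≤ dg G T t2 := key t2 h2.1 (clos_adj hnL ht1 h2.2)
  have e2 : t2 ∉ clos G T (F ∩ T) := fun h => (clos_adj hnF ht1 h2.2) (mem_inter.2 ⟨h, h2.1⟩)
  obtain ⟨t3, h3, h3n⟩ := exists_mem_notMem_of_card_lt_card
    (show ({t1, t0} : Finset V).card < (nb G T t2).card from lt_of_le_of_lt card_le_two (by unfold dg at d2; omega))
  rw [mem_nb] at h3
  simp at h3n
  have f1 := clos_self e1
  have f0 := clos_adj e1 ht1 h0.2
  have f2 := clos_self e2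
  have f3 := clos_adj e2 h2.1 h3.2
  rw [mem_inter] at f0 f1 f2 f3
  refine ⟨[t0, t1, t2, t3], by simp, ?_, ?_, ?_, ?_⟩
  · simp [h0.2.ne', h2.2.ne, h3.2.ne, h20.symm, Ne.symm h3n.1, Ne.symm h3n.2]
  · simp [h0.2.symm, h2.2, h3.2]
  · simp; tauto
  · simp; tauto

end OddWheel


namespace OddWheel
open Finset
open scoped Classical
set_option linter.unusedSectionVars false
set_option linter.unusedVariables false

variable {V : Type*} [Fintype V] [DecidableEq V]

lemma rep_cases {a b x y r : ℕ} (h : r ∈ List.replicate a x ++ List.replicate b y) :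
    (r = x ∧ 1 ≤ a) ∨ (r = y ∧ 1 ≤ b) := by
  rw [List.mem_append, List.mem_replicate, List.mem_replicate] at h
  omega

lemma pair_main (G : SimpleGraph V) (k : ℕ) (hk : 7 ≤ k)
    (hG : ¬ ContainsCopy (wheelGraph (2 * k + 1)) G) (S T : Finset V) (C1 F0 i j : ℕ)
    (hT : ∀ u ∈ T, dg G T u ≤ k - 1)
    (hmS : ∀ u ∈ S, T.card ≤ dg G T u + C1) (hF : (k + 1) * C1 + 2 * k ≤ F0)
    (hi : i ≤ k - 1) (hbS : k * F0 < (big G S i).card) (hbT : k * F0 < (big G T j).card)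
    (hji : j ≤ i) (hij : k - 1 ≤ i + j)
    (hlow : i = j → 2 * i = k - 1 → (T \ big G T j).card ≤ 2 * k * (k * F0))
    (hTc : k * (k * F0) + k * (2 * k * (k * F0)) + F0 < T.card) : i = k - 1 ∧ j = 0 := by
  by_contra hcon
  have hj : 1 ≤ j := by omega
  obtain ⟨v, hv⟩ : (big G S i).Nonempty := card_pos.1 (by omega)
  rw [mem_big] at hv
  obtain ⟨U, hU, hUc⟩ := exists_subset_card_eq (show i ≤ (nb G S v).card from hv.2)
  have mono : ∀ d ≤ j, k * F0 < (big G T d).card := by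
    intro d hd
    refine hbT.trans_le (card_le_card fun x hx => ?_)
    rw [mem_big] at hx ⊢
    exact ⟨hx.1, hd.trans hx.2⟩
  have p1 : HasPaths G T F0 1 := hasPaths_one G T F0 (by omega)
  have p2 : HasPaths G T F0 2 := hasPaths_two G T k F0 (by omega) hT (mono 1 hj)
  have fin : ∀ R : List ℕ, R.length = i → i + R.sum = 2 * k → (∀ r ∈ R, 1 ≤ r ∧ HasPaths G T F0 r) →
      False := by
    intro R h1 h2 h3
    exact hG (wheel_hub G k (by omega) S T C1 F0 hmS v hv.1 i (by omega) U hU hUc [] R (by simpa using h1)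
      (by simpa using h2) (by simp) (by simp) (by simp) h3 hF)
  by_cases c1 : 2 * k ≤ 3 * i
  · apply fin (List.replicate (2 * (k - i)) 2 ++ List.replicate (3 * i - 2 * k) 1)
    · simp; omega
    · simp; omega
    · intro r hr
      rcases rep_cases hr with ⟨rfl, _⟩ | ⟨rfl, _⟩
      · exact ⟨by norm_num, p2⟩
      · exact ⟨by norm_num, p1⟩
  have p3 : HasPaths G T F0 3 := hasPaths_three G T k F0 (by omega) hT (mono 2 (by omega))
  by_cases c2 : k ≤ 2 * i
  · apply fin (List.replicate (k - i) 3 ++ List.replicate (2 * i - k) 1)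
    · simp; omega
    · simp; omega
    · intro r hr
      rcases rep_cases hr with ⟨rfl, _⟩ | ⟨rfl, _⟩
      · exact ⟨by norm_num, p3⟩
      · exact ⟨by norm_num, p1⟩
  have hlow' := hlow (by omega) (by omega)
  have p4 : HasPaths G T F0 4 := by
    apply hasPaths_four G T k F0 (2 * k * (k * F0)) (by omega) hT ?_ (by omega)
    refine (card_le_card fun x hx => ?_).trans hlow'
    rw [mem_sdiff, mem_big] at hx ⊢
    refine ⟨hx.1, fun h => hx.2 ⟨h.1, by omega⟩⟩
  apply fin (List.replicate 2 4 ++ List.replicate (i - 2) 3)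
  · simp; omega
  · simp; omega
  · intro r hr
    rcases rep_cases hr with ⟨rfl, _⟩ | ⟨rfl, _⟩
    · exact ⟨by norm_num, p4⟩
    · exact ⟨by norm_num, p3⟩

lemma no_pieces (G : SimpleGraph V) (k : ℕ) (hk : 7 ≤ k)
    (hG : ¬ ContainsCopy (wheelGraph (2 * k + 1)) G) (S T : Finset V) (C1 F0 : ℕ)
    (hS : ∀ u ∈ S, dg G S u ≤ k - 1)
    (hmS : ∀ u ∈ S, T.card ≤ dg G T u + C1) (hmT : ∀ u ∈ T, S.card ≤ dg G S u + C1)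
    (hF : (k + 1) * C1 + 2 * k ≤ F0)
    (hbS : k * F0 < (big G S (k - 1)).card) (hTc : F0 < T.card) (P0 : List (List V)) (r : ℕ)
    (h1 : P0.length + r = k - 1) (h2 : k - 1 + P0.flatten.length + r = 2 * k)
    (h3 : P0.flatten.Nodup) (h4 : ∀ p ∈ P0, p ≠ [] ∧ p.IsChain G.Adj) (h5 : ∀ x ∈ P0.flatten, x ∈ T)
    (h6 : P0.flatten.length ≤ 4) : False := by
  set Q := P0.flatten.toFinset with hQ
  have hQT : ∀ x ∈ Q, x ∈ T := fun x hx => h5 x (by simpa [hQ] using hx)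
  have hQc : Q.card ≤ 4 := (List.toFinset_card_le _).trans h6
  have hB : (S \ cnb G S Q).card ≤ F0 := by
    have e1 := sum_miss_le G S Q C1 fun u hu => hmT u (hQT u hu)
    have e2 : (S \ cnb G S Q).card = S.card - (cnb G S Q).card :=
      card_sdiff_of_subset fun x hx => (mem_cnb.1 hx).1
    have : Q.card * C1 ≤ (k + 1) * C1 := Nat.mul_le_mul_right _ (by omega)
    omega
  obtain ⟨v, hv, hvc⟩ := big_avoid G S k F0 (k - 1) (by omega) hS hbS _ hB
  rw [mem_big] at hv
  obtain ⟨U, hU, hUc⟩ := exists_subset_card_eq (show k - 1 ≤ (nb G S v).card from hv.2)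
  refine hG (wheel_hub G k (by omega) S T C1 F0 hmS v hv.1 (k - 1) (by omega) U hU hUc P0
    (List.replicate r 1) (by simpa using h1) (by simpa using h2) h3 h4 ?_ ?_ hF)
  · intro u hu x hx
    have hu' : u ∈ S ∧ u ∉ (S \ cnb G S Q) ∩ S := by
      rcases mem_insert.1 hu with rfl | hu
      · exact ⟨hv.1, clos_self hvc⟩
      · have := mem_nb.1 (hU hu)
        exact ⟨this.1, clos_adj hvc hv.1 this.2⟩
    have : u ∈ cnb G S Q := by
      by_contra hc
      exact hu'.2 (mem_inter.2 ⟨mem_sdiff.2 ⟨hu'.1, hc⟩, hu'.1⟩)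
    exact ((mem_cnb.1 this).2 x (by simpa [hQ] using hx)).symm
  · intro r' hr
    rw [List.mem_replicate] at hr
    rw [hr.2]
    exact ⟨le_rfl, hasPaths_one G T F0 hTc⟩

lemma few_edges (G : SimpleGraph V) (k : ℕ) (hk : 7 ≤ k)
    (hG : ¬ ContainsCopy (wheelGraph (2 * k + 1)) G) (S T : Finset V) (C1 F0 : ℕ)
    (hS : ∀ u ∈ S, dg G S u ≤ k - 1)
    (hmS : ∀ u ∈ S, T.card ≤ dg G T u + C1) (hmT : ∀ u ∈ T, S.card ≤ dg G S u + C1)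
    (hF : (k + 1) * C1 + 2 * k ≤ F0)
    (hbS : k * F0 < (big G S (k - 1)).card) (hTc : F0 < T.card) : ∑ u ∈ T, dg G T u ≤ 2 := by
  have np := no_pieces G k hk hG S T C1 F0 hS hmS hmT hF hbS hTc
  have hle : ∀ u ∈ T, dg G T u ≤ 1 := by
    intro u hu
    by_contra! hc
    obtain ⟨w, z, hw, hz, hwz⟩ := one_lt_card_iff.1 (show 1 < (nb G T u).card from hc)
    rw [mem_nb] at hw hz
    refine np [[w, u, z]] (k - 2) (by simp; omega) (by simp; omega) ?_ ?_ ?_ (by simp)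
    · simp [hwz, hw.2.ne', hz.2.ne]
    · simp [hw.2.symm, hz.2]
    · simp; tauto
  by_contra! hc
  set Q := big G T 1 with hQ
  have hsum : ∑ u ∈ T, dg G T u ≤ Q.card := by
    rw [hQ, big, card_filter]
    refine sum_le_sum fun u hu => ?_
    have := hle u hu
    split_ifs <;> omega
  obtain ⟨x, hx⟩ : Q.Nonempty := card_pos.1 (by omega)
  rw [mem_big] at hx
  obtain ⟨y, hy⟩ : (nb G T x).Nonempty := card_pos.1 hx.2
  obtain ⟨c, hcQ, hcn⟩ := exists_mem_notMem_of_card_lt_card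
    (show ({x, y} : Finset V).card < Q.card from lt_of_le_of_lt card_le_two (by omega))
  rw [mem_big] at hcQ
  obtain ⟨d, hd⟩ : (nb G T c).Nonempty := card_pos.1 hcQ.2
  have hxy := mem_nb.1 hy
  have hcd := mem_nb.1 hd
  simp at hcn
  have uniq : ∀ p ∈ T, ∀ q r, q ∈ T → r ∈ T → G.Adj p q → G.Adj p r → q = r := by
    intro p hp q r hq hr h1 h2
    exact card_le_one.1 (hle p hp) q (mem_nb.2 ⟨hq, h1⟩) r (mem_nb.2 ⟨hr, h2⟩)
  have hdx : d ≠ x := by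
    rintro rfl
    exact hcn.2 (uniq d hx.1 _ _ hcQ.1 hxy.1 hcd.2.symm hxy.2)
  have hdy : d ≠ y := by
    rintro rfl
    exact hcn.1 (uniq d hcd.1 _ _ hcQ.1 hx.1 hcd.2.symm hxy.2.symm)
  refine np [[x, y], [c, d]] (k - 3) (by simp; omega) (by simp; omega) ?_ ?_ ?_ (by simp)
  · simp [hxy.2.ne, hcd.2.ne, Ne.symm hcn.1, Ne.symm hcn.2, hdx.symm, hdy.symm]
  · simp [hxy.2, hcd.2]
  · simp; tauto

end OddWheel


namespace OddWheel
open Finset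
open scoped Classical
set_option linter.unusedSectionVars false
set_option linter.unusedVariables false

variable {V : Type*} [Fintype V] [DecidableEq V]

lemma level_sum (G : SimpleGraph V) (S : Finset V) (k i : ℕ) (hS : ∀ u ∈ S, dg G S u ≤ k - 1) :
    ∑ u ∈ S, dg G S u + (S \ big G S i).card ≤ i * S.card + (k - 1) * (big G S (i + 1)).card := by
  have e1 : (S \ big G S i).card = ∑ u ∈ S, if i ≤ dg G S u then 0 else 1 := by
    rw [← filter_notMem_eq_sdiff, card_filter]
    refine sum_congr rfl fun u hu => ?_
    simp only [mem_big, hu, true_and]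
    split_ifs <;> tauto
  have e2 : (k - 1) * (big G S (i + 1)).card = ∑ u ∈ S, if i + 1 ≤ dg G S u then (k - 1) else 0 := by
    rw [big, card_filter, mul_sum]
    refine sum_congr rfl fun u hu => ?_
    split_ifs <;> simp
  have e3 : i * S.card = ∑ u ∈ S, i := by simp [mul_comm]
  rw [e1, e2, e3, ← sum_add_distrib, ← sum_add_distrib]
  refine sum_le_sum fun u hu => ?_
  have := hS u hu
  split_ifs <;> omega

lemma level (G : SimpleGraph V) (S : Finset V) (k M : ℕ) (hS : ∀ u ∈ S, dg G S u ≤ k - 1)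
    (hM : M < S.card) : ∃ i ≤ k - 1, M < (big G S i).card ∧
    ∑ u ∈ S, dg G S u + (S \ big G S i).card ≤ i * S.card + (k - 1) * M := by
  have h0 : M < (big G S 0).card := by
    have : big G S 0 = S := by ext x; simp [mem_big]
    rwa [this]
  obtain ⟨i, hi, hiM, hmax⟩ : ∃ i ≤ k - 1, M < (big G S i).card ∧
      (i < k - 1 → (big G S (i + 1)).card ≤ M) := by
    refine ⟨Nat.findGreatest (fun i => M < (big G S i).card) (k - 1), Nat.findGreatest_le _,
      Nat.findGreatest_spec (P := fun i => M < (big G S i).card) (Nat.zero_le _) h0, fun h => ?_⟩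
    have := Nat.findGreatest_is_greatest (P := fun i => M < (big G S i).card) (Nat.lt_succ_self _) h
    simpa using this
  refine ⟨i, hi, hiM, (level_sum G S k i hS).trans ?_⟩
  rcases hi.lt_or_eq with h | h
  · have := Nat.mul_le_mul_left (k - 1) (hmax h)
    omega
  · have : big G S (i + 1) = ∅ := by
      ext x
      simp only [mem_big, notMem_empty, iff_false, not_and]
      intro hx
      have := hS x hx
      omega
    rw [this]; simp

lemma pre_struct (k : ℕ) (hk : 2 ≤ k) : ∃ N : ℕ, ∀ n : ℕ, N ≤ n →
    ∀ G : SimpleGraph (Fin n), IsExWheel (2 * k + 1) G → n ^ 2 + (k - 1) * n ≤ 4 * edgeCount G →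
    ∃ S : Finset (Fin n), (∀ v ∈ S, dg G S v ≤ k - 1) ∧ (∀ v ∈ Sᶜ, dg G Sᶜ v ≤ k - 1) ∧
      (∀ v ∈ S, Sᶜ.card ≤ dg G Sᶜ v + (8 * k * (k + 1) + k)) ∧
      (∀ v ∈ Sᶜ, S.card ≤ dg G S v + (8 * k * (k + 1) + k)) ∧
      n ≤ 4 * S.card ∧ n ≤ 4 * Sᶜ.card := by
  have hkr : (2:ℝ) ≤ k := by exact_mod_cast hk
  obtain ⟨N0, hN0⟩ := stab k hk (1 / (16 * (k + 2))) (by positivity)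
  refine ⟨max N0 (16 * (2 * k + 2)), fun n hn G hG hE => ?_⟩
  obtain ⟨S, h1, h2, h3⟩ := hN0 n (by omega) G hG (le_trans (Nat.le_add_right _ _) hE)
  have hnr : (16 * (2 * k + 2) : ℝ) ≤ n := by exact_mod_cast (show 16 * (2 * k + 2) ≤ n by omega)
  have hκ : (1 / (16 * (k + 2)) : ℝ) * n * (k + 1) ≤ n / 16 := by
    rw [div_mul_eq_mul_div, one_mul, div_mul_eq_mul_div, div_le_div_iff₀ (by positivity) (by positivity)]
    nlinarith
  have hκ' : (1 / (16 * (k + 2)) : ℝ) * n ≤ n / 16 := by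
    have : (0:ℝ) ≤ 1 / (16 * (k + 2)) * n := by positivity
    nlinarith
  have hsum : S.card + Sᶜ.card = n := by
    have := card_add_card_compl S
    rwa [Fintype.card_fin] at this
  have hsumr : (S.card : ℝ) + Sᶜ.card = n := by exact_mod_cast hsum
  rw [abs_le] at h3
  have ha : (3 * n / 8 : ℝ) ≤ S.card := by linarith
  have hb : (3 * n / 8 : ℝ) ≤ Sᶜ.card := by linarith
  have ha' : n ≤ 4 * S.card := by
    have : (n : ℝ) ≤ 4 * S.card := by linarith
    exact_mod_cast this
  have hb' : n ≤ 4 * Sᶜ.card := by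
    have : (n : ℝ) ≤ 4 * Sᶜ.card := by linarith
    exact_mod_cast this
  set μ := ⌊(1 / (16 * (k + 2)) : ℝ) * n⌋₊ with hμ
  have hμ1 : (μ : ℝ) ≤ (1 / (16 * (k + 2)) : ℝ) * n := Nat.floor_le (by positivity)
  have conv : ∀ x y : ℕ, (x : ℝ) - y ≤ (1 / (16 * (k + 2)) : ℝ) * n → x ≤ y + μ := by
    intro x y h
    have : x - y ≤ μ := by
      apply Nat.le_floor
      rcases le_total y x with h' | h'
      · rw [Nat.cast_sub h']; exact h
      · rw [Nat.sub_eq_zero_of_le h']; simp; positivity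
    omega
  have hbig : ∀ c : ℕ, (3 * n / 8 : ℝ) ≤ c → (k + 1) * μ + k ≤ c := by
    intro c hc
    have : ((k + 1) * μ + k : ℝ) ≤ c := by nlinarith
    exact_mod_cast this
  have dS : ∀ v ∈ S, dg G S v ≤ k - 1 :=
    inner_deg G k hk hG.1 S Sᶜ μ (fun u hu => conv _ _ (h1 u hu)) (hbig _ hb)
  have dT : ∀ v ∈ Sᶜ, dg G Sᶜ v ≤ k - 1 :=
    inner_deg G k hk hG.1 Sᶜ S μ (fun u hu => conv _ _ (h2 u hu)) (hbig _ ha)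
  have e := two_edgeCount_split G S
  have s1 : ∑ v ∈ S, dg G S v ≤ S.card * (k - 1) := by
    simpa using sum_le_sum dS
  have s2 : ∑ v ∈ Sᶜ, dg G Sᶜ v ≤ Sᶜ.card * (k - 1) := by
    simpa using sum_le_sum dT
  have hm : (S.card : ℝ) * Sᶜ.card - ((∑ v ∈ S, dg G Sᶜ v : ℕ) : ℝ) ≤ k * n / 4 := by
    obtain ⟨m, rfl⟩ : ∃ m, k = m + 1 := ⟨k - 1, by omega⟩
    simp only [Nat.add_sub_cancel] at s1 s2 hE
    have e' : 2 * (edgeCount G : ℝ) = ((∑ v ∈ S, dg G S v : ℕ) : ℝ) + ((∑ v ∈ Sᶜ, dg G Sᶜ v : ℕ) : ℝ)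
      + 2 * ((∑ v ∈ S, dg G Sᶜ v : ℕ) : ℝ) := by exact_mod_cast e
    have s1' : ((∑ v ∈ S, dg G S v : ℕ) : ℝ) ≤ S.card * m := by exact_mod_cast s1
    have s2' : ((∑ v ∈ Sᶜ, dg G Sᶜ v : ℕ) : ℝ) ≤ Sᶜ.card * m := by exact_mod_cast s2
    have hE' : (n:ℝ) ^ 2 + m * n ≤ 4 * edgeCount G := by exact_mod_cast hE
    have s12 : (S.card : ℝ) * m + Sᶜ.card * m = m * n := by rw [← hsumr]; ring
    have hab : (S.card : ℝ) * Sᶜ.card ≤ n ^ 2 / 4 := by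
      rw [← hsumr]; nlinarith [sq_nonneg ((S.card : ℝ) - Sᶜ.card)]
    push_cast at *
    nlinarith
  have hMθ : ∀ c : ℕ, (3 * n / 8 : ℝ) ≤ c → (2 * k + 2 + (k * n / 4) / (4 * k) : ℝ) ≤ c := by
    intro c hc
    have : (k * n / 4 : ℝ) / (4 * k) = n / 16 := by field_simp; norm_num
    rw [this]; linarith
  have m1 := min_deg G hG S Sᶜ (k * n / 4) (4 * k) (by positivity) (by rw [sum_miss]; exact hm)
    (hMθ _ ha)
  have m2 := min_deg G hG Sᶜ S (k * n / 4) (4 * k) (by positivity) (by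
    rw [sum_miss, ← sum_dg_comm, mul_comm]; exact hm) (hMθ _ hb)
  refine ⟨S, dS, dT, ?_, ?_, ha', hb'⟩
  · intro v hv
    have q1 := m1 v
    rw [dg_add_compl G S v] at q1
    have q2 := dS v hv
    have : (Sᶜ.card : ℝ) ≤ ((dg G S v + dg G Sᶜ v : ℕ) : ℝ) + (8 * k * (k + 1) + 1) := by
      push_cast at *; linarith
    have : Sᶜ.card ≤ (dg G S v + dg G Sᶜ v) + (8 * k * (k + 1) + 1) := by exact_mod_cast this
    omega
  · intro v hv
    have q1 := m2 v
    rw [dg_add_compl G S v] at q1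
    have q2 := dT v hv
    have : (S.card : ℝ) ≤ ((dg G S v + dg G Sᶜ v : ℕ) : ℝ) + (8 * k * (k + 1) + 1) := by
      push_cast at *; linarith
    have : S.card ≤ (dg G S v + dg G Sᶜ v) + (8 * k * (k + 1) + 1) := by exact_mod_cast this
    omega

lemma num_ij (k M a b i j lo : ℕ) (e x y c: ℕ) (hk : 1 ≤ k)
    (he : 2 * e = x + y + 2 * c) (hc : c ≤ a * b) (hi : i ≤ k - 1) (hj : j ≤ k - 1)
    (hE : (a + b) ^ 2 + (k - 1) * (a + b) ≤ 4 * e)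
    (hx : x ≤ i * a + (k - 1) * M) (hy : y + lo ≤ j * b + (k - 1) * M)
    (hn : k ^ 2 + 4 * k * M < a + b) :
    k - 1 ≤ i + j ∧ (i = j → 2 * i = k - 1 → lo ≤ 2 * k * M) := by
  obtain ⟨m, rfl⟩ : ∃ m, k = m + 1 := ⟨k - 1, by omega⟩
  simp only [Nat.add_sub_cancel] at *
  zify at *
  have key : (m : ℤ) * (a + b) + (a - b) ^ 2 + 2 * lo ≤ 2 * (i * a + j * b) + 4 * m * M := by nlinarith
  constructor
  · by_contra! hcon
    have h1 : (i : ℤ) + j + 1 ≤ m := by omega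
    have h2 : ((i : ℤ) - j) ^ 2 ≤ m ^ 2 := by
      rw [sq_le_sq, abs_le]
      rw [abs_of_nonneg (by omega : (0:ℤ) ≤ m)]
      constructor <;> omega
    have h3 : ((i : ℤ) + j) * (a + b) + (a + b) ≤ m * (a + b) := by
      nlinarith [mul_le_mul_of_nonneg_right h1 (show (0:ℤ) ≤ a + b by omega)]
    nlinarith [sq_nonneg (((i : ℤ) - j) - 2 * (a - b)), sq_nonneg ((i : ℤ) - j), mul_nonneg (show (0:ℤ) ≤ m by omega) (show (0:ℤ) ≤ M by omega)]
  · intro h1 h2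
    rw [← h1] at key
    have h3 : (2 * (i : ℤ)) * (a + b) = m * (a + b) := by rw [h2]
    nlinarith [sq_nonneg ((a : ℤ) - b)]

lemma struct (k : ℕ) (hk : 7 ≤ k) : ∃ N C : ℕ, ∀ n : ℕ, N ≤ n →
    ∀ G : SimpleGraph (Fin n), IsExWheel (2 * k + 1) G → n ^ 2 + (k - 1) * n ≤ 4 * edgeCount G →
    ∃ S : Finset (Fin n), (∀ v ∈ S, dg G S v ≤ k - 1) ∧
      (∀ v ∈ S, Sᶜ.card ≤ dg G Sᶜ v + C) ∧
      (∀ v ∈ Sᶜ, S.card ≤ dg G S v + C) ∧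
      (∑ v ∈ Sᶜ, dg G Sᶜ v ≤ 2) ∧ n ≤ 4 * S.card ∧ n ≤ 4 * Sᶜ.card := by
  obtain ⟨N0, hN0⟩ := pre_struct k (by omega)
  obtain ⟨C, hC⟩ : ∃ C, C = 8 * k * (k + 1) + k := ⟨_, rfl⟩
  obtain ⟨F0, hF0⟩ : ∃ F0, F0 = (k + 1) * C + 2 * k := ⟨_, rfl⟩
  obtain ⟨X, hX⟩ : ∃ X, X = k * (k * F0) + k * (2 * k * (k * F0)) + F0 := ⟨_, rfl⟩
  refine ⟨max (max N0 (k ^ 2 + 4 * k * (k * F0) + 1)) (4 * (X + k * F0) + 4), C, fun n hn G hG hE => ?_⟩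
  obtain ⟨S, dS, dT, mS, mT, ha, hb⟩ := hN0 n (by omega) G hG hE
  rw [← hC] at mS mT
  have hsum : S.card + Sᶜ.card = n := by
    have := card_add_card_compl S
    rwa [Fintype.card_fin] at this
  have aux : ∀ (S T : Finset (Fin n)) (i j : ℕ), (∀ v ∈ S, dg G S v ≤ k - 1) →
      (∀ v ∈ T, dg G T v ≤ k - 1) → (∀ v ∈ S, T.card ≤ dg G T v + C) →
      (∀ v ∈ T, S.card ≤ dg G S v + C) → n ≤ 4 * T.card → i ≤ k - 1 → j ≤ i → k - 1 ≤ i + j →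
      k * F0 < (big G S i).card → k * F0 < (big G T j).card →
      (i = j → 2 * i = k - 1 → (T \ big G T j).card ≤ 2 * k * (k * F0)) →
      ∑ u ∈ T, dg G T u ≤ 2 := by
    intro S T i j dS dT mS mT hT hi hji hij bS bT low
    obtain ⟨rfl, rfl⟩ := pair_main G k hk hG.1 S T C F0 i j dT mS (by omega) hi bS bT hji hij low (by omega)
    exact few_edges G k hk hG.1 S T C F0 dS mS mT (by omega) bS (by omega)
  obtain ⟨i, hi, bi, si⟩ := level G S k (k * F0) dS (by omega)
  obtain ⟨j, hj, bj, sj⟩ := level G Sᶜ k (k * F0) dT (by omega)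
  have e := two_edgeCount_split G S
  have hc : ∑ v ∈ S, dg G Sᶜ v ≤ S.card * Sᶜ.card := by
    simpa using sum_le_sum (s := S) fun v _ => (dg_le_card : dg G Sᶜ v ≤ Sᶜ.card)
  obtain ⟨hij, low1⟩ := num_ij k (k * F0) S.card Sᶜ.card i j _ _ _ _ _ (by omega) e hc hi hj
    (by rw [hsum]; exact hE) (by omega) sj (by omega)
  obtain ⟨-, low2⟩ := num_ij k (k * F0) Sᶜ.card S.card j i _ (edgeCount G) (∑ v ∈ Sᶜ, dg G Sᶜ v) (∑ v ∈ S, dg G S v) (∑ v ∈ S, dg G Sᶜ v)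
    (by omega) (by rw [e]; ring) (by rw [mul_comm]; exact hc) hj hi
    (by rw [add_comm Sᶜ.card, hsum]; exact hE) (by omega) si (by omega)
  rcases le_total j i with hji | hji
  · exact ⟨S, dS, mS, mT, aux S Sᶜ i j dS dT mS mT hb hi hji hij bi bj low1, ha, hb⟩
  · have := aux Sᶜ S j i dT dS mT mS ha hj hji (by omega) bj bi low2
    refine ⟨Sᶜ, dT, ?_⟩
    rw [compl_compl]
    exact ⟨mT, mS, this, hb, ha⟩

end OddWheel


namespace OddWheel
open Finset
open scoped Classical
set_option linter.unusedSectionVars false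
set_option linter.unusedVariables false

variable {V : Type*} [Fintype V] [DecidableEq V]

/-- A copy of a wheel as a hub and a periodic sequence of rim vertices. -/
lemma copy_seq (G : SimpleGraph V) (k : ℕ) (hk : 2 ≤ k) (h : ContainsCopy (wheelGraph (2 * k + 1)) G) :
    ∃ (c : V) (g : ℕ → V), (∀ i, G.Adj c (g i)) ∧ (∀ i, G.Adj (g i) (g (i + 1))) ∧
      (∀ i j, g i = g j → i % (2 * k) = j % (2 * k)) ∧ (∀ i, g (i % (2 * k)) = g i) := by
  obtain ⟨f, hf⟩ := h
  have hm : ∀ i : ℕ, i % (2 * k) < 2 * k := fun i => Nat.mod_lt _ (by omega)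
  refine ⟨f ⟨0, by omega⟩, fun i => f ⟨i % (2 * k) + 1, by have := hm i; omega⟩, ?_, ?_, ?_, ?_⟩
  · intro i
    apply hf
    refine ⟨?_, Or.inl rfl⟩
    intro h
    have := congrArg Fin.val h
    simp at this
  · intro i
    apply hf
    have h1 := hm i
    have h2 := hm (i + 1)
    have h3 : (i + 1) % (2 * k) = if i % (2 * k) + 1 = 2 * k then 0 else i % (2 * k) + 1 := by
      rw [Nat.add_mod, Nat.mod_eq_of_lt (show 1 < 2 * k by omega)]
      split_ifs with h
      · rw [h, Nat.mod_self]
      · exact Nat.mod_eq_of_lt (by omega)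
    refine ⟨?_, ?_⟩
    · intro h
      have := congrArg Fin.val h
      simp only at this
      split_ifs at h3 <;> omega
    · simp only
      split_ifs at h3 <;> omega
  · intro i j h
    have := congrArg Fin.val (f.injective h)
    simp only at this
    omega
  · intro i
    simp

lemma wheelFree_of (H : SimpleGraph V) (k : ℕ) (hk : 2 ≤ k) (S : Finset V) (p q : V) (l : V → ℕ)
    (hS : ∀ v ∈ S, dg H S v ≤ k - 1) (hl : ∀ u ∈ S, ∀ v ∈ S, H.Adj u v → l u = l v)
    (hlc : ∀ m, (S.filter fun v => l v = m).card ≤ 2 * k - 2)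
    (hT : ∀ u ∉ S, ∀ v ∉ S, H.Adj u v → (u = p ∧ v = q) ∨ (u = q ∧ v = p)) :
    ¬ ContainsCopy (wheelGraph (2 * k + 1)) H := by
  intro hcopy
  obtain ⟨c, g, hc, hg, hinj, hper⟩ := copy_seq H k hk hcopy
  have hinj' : Set.InjOn g (range (2 * k)) := by
    intro i hi j hj h
    have := hinj i j h
    simp at hi hj
    rwa [Nat.mod_eq_of_lt hi, Nat.mod_eq_of_lt hj] at this
  by_cases hcS : c ∈ S
  · set I := (range (2 * k)).filter fun i => g i ∈ S with hI
    set J := (range (2 * k)).filter fun i => ¬ g i ∈ S with hJ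
    have hIJ : I.card + J.card = 2 * k := by
      rw [hI, hJ, card_filter_add_card_filter_not, card_range]
    have hIc : I.card ≤ k - 1 := by
      refine le_trans ?_ (hS c hcS)
      refine card_le_card_of_injOn g ?_ ?_
      · intro i hi
        have := (mem_filter.1 hi).2
        exact mem_nb.2 ⟨this, hc i⟩
      · exact hinj'.mono fun x hx => (mem_filter.1 hx).1
    set J1 := J.filter fun i => g (i + 1) ∈ S with hJ1
    set J2 := J.filter fun i => ¬ g (i + 1) ∈ S with hJ2
    have hJ12 : J1.card + J2.card = J.card := by
      rw [hJ1, hJ2, card_filter_add_card_filter_not]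
    have hJ1c : J1.card ≤ I.card := by
      refine card_le_card_of_injOn (fun i => (i + 1) % (2 * k)) ?_ ?_
      · intro i hi
        have := (mem_filter.1 hi).2
        refine mem_coe.2 (mem_filter.2 ⟨mem_range.2 (Nat.mod_lt _ (by omega)), ?_⟩)
        simp only [hper]
        exact this
      · intro i hi j hj h
        have hi := mem_range.1 (mem_filter.1 (mem_filter.1 hi).1).1
        have hj := mem_range.1 (mem_filter.1 (mem_filter.1 hj).1).1
        simp only at h
        have : i % (2 * k) = j % (2 * k) := Nat.ModEq.add_right_cancel' 1 h
        rwa [Nat.mod_eq_of_lt hi, Nat.mod_eq_of_lt hj] at this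
    obtain ⟨i, j, hi, hj, hij⟩ := one_lt_card_iff.1 (show 1 < J2.card by omega)
    have hi1 := mem_filter.1 hi
    have hj1 := mem_filter.1 hj
    have hi2 := mem_filter.1 hi1.1
    have hj2 := mem_filter.1 hj1.1
    have ei := hT _ hi2.2 _ hi1.2 (hg i)
    have ej := hT _ hj2.2 _ hj1.2 (hg j)
    have hne : g i ≠ g j := fun h => hij (hinj' (mem_coe.2 hi2.1) (mem_coe.2 hj2.1) h)
    have e1 : g i = g (j + 1) := by
      rcases ei with ⟨a, b⟩ | ⟨a, b⟩ <;> rcases ej with ⟨a', b'⟩ | ⟨a', b'⟩ <;> simp_all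
    have e2 : g (i + 1) = g j := by
      rcases ei with ⟨a, b⟩ | ⟨a, b⟩ <;> rcases ej with ⟨a', b'⟩ | ⟨a', b'⟩ <;> simp_all
    have m1 := hinj _ _ e1
    have m2 : (i + 1) % (2 * k) = j % (2 * k) := hinj _ _ e2
    have m3 : (i + 1 + 1) % (2 * k) = (j + 1) % (2 * k) := Nat.ModEq.add_right 1 m2
    rw [← m1] at m3
    have m4 : (i + 2) ≡ (i + 0) [MOD (2 * k)] := m3
    have m5 := Nat.ModEq.add_left_cancel' i m4
    unfold Nat.ModEq at m5
    rw [Nat.zero_mod, Nat.mod_eq_of_lt (by omega)] at m5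
    omega
  · have hone : ∀ i j, g i ∉ S → g j ∉ S → i % (2 * k) = j % (2 * k) := by
      intro i j hi hj
      apply hinj
      have e1 := hT _ hcS _ hi (hc i)
      have e2 := hT _ hcS _ hj (hc j)
      have := (hc i).ne
      have := (hc j).ne
      rcases e1 with ⟨a, b⟩ | ⟨a, b⟩ <;> rcases e2 with ⟨a', b'⟩ | ⟨a', b'⟩ <;> simp_all
    obtain ⟨d, hd⟩ : ∃ d, ∀ t, 1 ≤ t → t < 2 * k → g (d + t) ∈ S := by
      by_cases h : ∃ d, g d ∉ S
      · obtain ⟨d, hd⟩ := h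
        refine ⟨d, fun t h1 h2 => ?_⟩
        by_contra hcon
        have := hone (d + t) d hcon hd
        have m4 : (d + t) ≡ (d + 0) [MOD (2 * k)] := this
        have m5 := Nat.ModEq.add_left_cancel' d m4
        unfold Nat.ModEq at m5
        rw [Nat.zero_mod, Nat.mod_eq_of_lt (by omega)] at m5
        omega
      · push Not at h
        exact ⟨0, fun t _ _ => h _⟩
    have hlab : ∀ t, 1 ≤ t → t < 2 * k → l (g (d + t)) = l (g (d + 1)) := by
      intro t h1
      induction t, h1 using Nat.le_induction with
      | base => intro _; rfl
      | succ t h1 ih =>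
        intro h2
        rw [← ih (by omega)]
        exact (hl _ (hd t h1 (by omega)) _ (hd (t + 1) (by omega) h2) (hg (d + t))).symm
    have hcard : (Ico 1 (2 * k)).card ≤ (S.filter fun v => l v = l (g (d + 1))).card := by
      refine card_le_card_of_injOn (fun t => g (d + t)) ?_ ?_
      · intro t ht
        rw [mem_coe, mem_Ico] at ht
        exact mem_coe.2 (mem_filter.2 ⟨hd t ht.1 ht.2, hlab t ht.1 ht.2⟩)
      · intro t ht t' ht' h
        rw [mem_coe, mem_Ico] at ht ht'
        have m5 := Nat.ModEq.add_left_cancel' d (hinj _ _ h)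
        unfold Nat.ModEq at m5
        rwa [Nat.mod_eq_of_lt (by omega), Nat.mod_eq_of_lt (by omega)] at m5
    have := hlc (l (g (d + 1)))
    simp at hcard
    omega

end OddWheel


namespace OddWheel
open Finset
open scoped Classical
set_option linter.unusedSectionVars false
set_option linter.unusedVariables false

/-- there is a `(k-1)`-regular graph on `c` vertices with all label classes of size at most `2k-2` -/
def Good (k c : ℕ) : Prop := ∃ (W : Type) (_ : Fintype W) (R : SimpleGraph W) (l : W → ℕ),
  Fintype.card W = c ∧ (∀ v, dg R univ v = k - 1) ∧ (∀ u v, R.Adj u v → l u = l v) ∧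
  ∀ m, (univ.filter fun v => l v = m).card ≤ 2 * k - 2

lemma dg_univ_eq {W : Type*} [Fintype W] (R : SimpleGraph W) [DecidableRel R.Adj] (v : W) :
    dg R univ v = R.degree v := by
  unfold dg nb
  rw [← R.card_neighborFinset_eq_degree]
  congr 1
  ext x
  simp

lemma good_of_le (k c : ℕ) (R : SimpleGraph (Fin c)) (hc : c ≤ 2 * k - 2) (h : ∀ v, dg R univ v = k - 1) :
    Good k c := by
  refine ⟨Fin c, inferInstance, R, fun _ => 0, by simp, h, fun _ _ _ => rfl, fun m => ?_⟩
  refine (card_le_univ _).trans ?_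
  simpa using hc

lemma good_k (k : ℕ) (hk : 4 ≤ k) : Good k k := by
  refine good_of_le k k ⊤ (by omega) fun v => ?_
  rw [dg_univ_eq]
  simp

lemma good_k2 (k : ℕ) (hk : 4 ≤ k) : Good k (k + 2) := by
  obtain ⟨m, rfl⟩ : ∃ m, k = m + 1 := ⟨k - 1, by omega⟩
  refine good_of_le (m + 1) (m + 3) (SimpleGraph.cycleGraph (m + 3))ᶜ (by omega) fun v => ?_
  rw [dg_univ_eq, SimpleGraph.degree_compl, SimpleGraph.cycleGraph_degree_three_le]
  simp

lemma good_zero (k : ℕ) : Good k 0 := by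
  refine good_of_le k 0 ⊤ (by omega) fun v => v.elim0

lemma good_add (k a b : ℕ) (ha : Good k a) (hb : Good k b) : Good k (a + b) := by
  obtain ⟨W1, i1, R1, l1, c1, d1, a1, m1⟩ := ha
  obtain ⟨W2, i2, R2, l2, c2, d2, a2, m2⟩ := hb
  refine ⟨W1 ⊕ W2, inferInstance, R1 ⊕g R2, Sum.elim (fun x => 2 * l1 x) (fun x => 2 * l2 x + 1), ?_, ?_, ?_, ?_⟩
  · simp [c1, c2]
  · rintro (v | v)
    · rw [← d1 v]
      unfold dg
      rw [← card_map (Function.Embedding.inl : W1 ↪ W1 ⊕ W2)]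
      congr 1
      ext (x | x) <;> simp [mem_nb]
    · rw [← d2 v]
      unfold dg
      rw [← card_map (Function.Embedding.inr : W2 ↪ W1 ⊕ W2)]
      congr 1
      ext (x | x) <;> simp [mem_nb]
  · rintro (u | u) (v | v) h
    · simp at h ⊢; exact a1 _ _ h
    · simp at h
    · simp at h
    · simp at h ⊢; exact a2 _ _ h
  · intro m
    rcases Nat.even_or_odd' m with ⟨t, rfl | rfl⟩
    · refine le_trans (le_of_eq ?_) (m1 t)
      rw [← card_map (Function.Embedding.inl : W1 ↪ W1 ⊕ W2)]
      congr 1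
      ext (x | x) <;> simp
      omega
    · refine le_trans (le_of_eq ?_) (m2 t)
      rw [← card_map (Function.Embedding.inr : W2 ↪ W1 ⊕ W2)]
      congr 1
      ext (x | x) <;> simp
      omega

lemma good_mul (k c t : ℕ) (h : Good k c) : Good k (t * c) := by
  induction t with
  | zero => simpa using good_zero k
  | succ t ih => rw [Nat.succ_mul]; exact good_add k _ _ ih h

lemma good_all (k : ℕ) (hk : 4 ≤ k) (a : ℕ) (ha : k * (k + 2) ≤ a) (hpar : Even a ∨ Odd k) : Good k a := by
  obtain ⟨y, hy, x, hx⟩ : ∃ y, y ≤ k ∧ ∃ x, a = x * k + y * (k + 2) := by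
    obtain ⟨y, hy, hyk⟩ : ∃ y, y ≤ k ∧ 2 * y % k = a % k := by
      have h1 := Nat.div_add_mod a k
      have h2 := Nat.mod_lt a (show 0 < k by omega)
      rcases Nat.even_or_odd' (a % k) with ⟨r, hr | hr⟩
      · refine ⟨r, by omega, ?_⟩
        rw [← hr]; simp
      · have hodd : Odd k := by
          rcases hpar with h | h
          · by_contra hc
            rw [Nat.not_odd_iff_even] at hc
            have := (hc.mul_right (a / k))
            rw [← h1] at h
            rw [Nat.even_add] at h
            have := h.1 this
            rw [hr] at this
            exact absurd this (by simp)
          · exact h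
        obtain ⟨s, hs⟩ := hodd
        refine ⟨(r + s + 1), by omega, ?_⟩
        have : 2 * (r + s + 1) = (2 * r + 1) + k := by omega
        rw [this, ← hr]; simp
    have h1 : y * (k + 2) ≤ a := (Nat.mul_le_mul_right _ hy).trans ha
    have h2 : (k : ℕ) ∣ a - y * (k + 2) := by
      apply (Nat.modEq_iff_dvd' h1).1
      unfold Nat.ModEq
      rw [← hyk, show y * (k + 2) = 2 * y + k * y by ring, Nat.add_mul_mod_self_left]
    obtain ⟨x, hx⟩ := h2
    exact ⟨y, hy, x, by rw [mul_comm x]; omega⟩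
  rw [hx]
  exact good_add k _ _ (good_mul k _ _ (good_k k hk)) (good_mul k _ _ (good_k2 k hk))

/-- join of `R` with an empty graph plus the edge `pq` -/
def joinGraph {W B : Type*} (R : SimpleGraph W) (p q : B) (hpq : p ≠ q) : SimpleGraph (W ⊕ B) where
  Adj x y := match x, y with
    | Sum.inl u, Sum.inl v => R.Adj u v
    | Sum.inl _, Sum.inr _ => True
    | Sum.inr _, Sum.inl _ => True
    | Sum.inr i, Sum.inr j => (i = p ∧ j = q) ∨ (i = q ∧ j = p)
  symm := by
    constructor
    rintro (u | u) (v | v) h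
    · exact h.symm
    · trivial
    · trivial
    · simp only at h ⊢; tauto
  loopless := by
    constructor
    rintro (u | u) h
    · exact R.loopless.irrefl u h
    · simp only at h
      rcases h with ⟨rfl, h⟩ | ⟨rfl, h⟩
      · exact hpq h
      · exact hpq h.symm

lemma dg_comap {V W : Type*} [Fintype V] [Fintype W] (e : V ≃ W) (H : SimpleGraph W) (X : Finset W) (v : V) :
    dg (H.comap e) (X.map e.symm.toEmbedding) v = dg H X (e v) := by
  unfold dg
  rw [← card_map e.symm.toEmbedding (s := nb H X (e v))]
  congr 1
  ext x
  simp only [mem_nb, mem_map_equiv, Equiv.symm_symm, SimpleGraph.comap_adj]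

lemma exists_H (k : ℕ) (hk : 4 ≤ k) (n a : ℕ) (ha : k * (k + 2) ≤ a) (hb : a + 2 ≤ n)
    (hpar : Even a ∨ Odd k) : ∃ (H : SimpleGraph (Fin n)) (S : Finset (Fin n)),
    WheelFree (2 * k + 1) H ∧ S.card = a ∧ (∀ v ∈ S, dg H S v = k - 1) ∧
    (∀ v ∈ S, dg H Sᶜ v = Sᶜ.card) ∧ (∀ v ∈ Sᶜ, dg H S v = S.card) ∧ ∑ v ∈ Sᶜ, dg H Sᶜ v = 2 := by
  obtain ⟨W, iW, R, l, hc, hd, hl, hm⟩ := good_all k hk a ha hpar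
  obtain ⟨b, rfl⟩ : ∃ b, n = a + (b + 2) := ⟨n - a - 2, by omega⟩
  have hpq : (0 : Fin (b + 2)) ≠ 1 := by simp
  set H0 := joinGraph R (0 : Fin (b + 2)) 1 hpq with hH0
  set S0 : Finset (W ⊕ Fin (b + 2)) := univ.map Function.Embedding.inl with hS0
  have hT0 : S0ᶜ = univ.map Function.Embedding.inr := by
    ext (x | x) <;> simp [hS0]
  have e : Fin (a + (b + 2)) ≃ W ⊕ Fin (b + 2) := Fintype.equivOfCardEq (by simp [hc])
  have hmem : ∀ v, v ∈ S0.map e.symm.toEmbedding ↔ e v ∈ S0 := fun v => by simp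
  have hcompl : (S0.map e.symm.toEmbedding)ᶜ = S0ᶜ.map e.symm.toEmbedding := by
    ext v; simp
  have g1 : ∀ v ∈ S0, dg H0 S0 v = k - 1 := by
    rintro (v | v) hv
    · rw [← hd v]
      unfold dg
      rw [← card_map (Function.Embedding.inl : W ↪ W ⊕ Fin (b + 2))]
      congr 1
      ext (x | x) <;> simp [mem_nb, hH0, joinGraph, hS0]
    · simp [hS0] at hv
  have g2 : ∀ v ∈ S0, dg H0 S0ᶜ v = S0ᶜ.card := by
    rintro (v | v) hv
    · unfold dg
      congr 1
      ext (x | x) <;> simp [mem_nb, hH0, joinGraph, hS0]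
    · simp [hS0] at hv
  have g3 : ∀ v ∈ S0ᶜ, dg H0 S0 v = S0.card := by
    rintro (v | v) hv
    · simp [hS0] at hv
    · unfold dg
      congr 1
      ext (x | x) <;> simp [mem_nb, hH0, joinGraph, hS0]
  have g4 : ∑ v ∈ S0ᶜ, dg H0 S0ᶜ v = 2 := by
    have : ∀ i : Fin (b + 2), dg H0 S0ᶜ (Sum.inr i) = (if i = 0 then 1 else 0) + (if i = 1 then 1 else 0) := by
      intro i
      by_cases h0 : i = 0
      · subst h0
        have : nb H0 S0ᶜ (Sum.inr 0) = {Sum.inr 1} := by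
          ext (x | x) <;> simp [mem_nb, hH0, joinGraph, hS0]
        simp [dg, this]
      · by_cases h1 : i = 1
        · subst h1
          have : nb H0 S0ᶜ (Sum.inr 1) = {Sum.inr 0} := by
            ext (x | x) <;> simp [mem_nb, hH0, joinGraph, hS0]
          simp [dg, this]
        · have : nb H0 S0ᶜ (Sum.inr i) = ∅ := by
            ext (x | x) <;> simp [mem_nb, hH0, joinGraph, hS0, h0, h1]
          simp [dg, this, h0, h1]
    rw [hT0, sum_map, ← hT0]
    simp only [Function.Embedding.inr_apply, this, sum_add_distrib]
    simp
  refine ⟨H0.comap e, S0.map e.symm.toEmbedding, ?_, ?_, ?_, ?_, ?_, ?_⟩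
  · refine wheelFree_of _ k (by omega) (S0.map e.symm.toEmbedding) (e.symm (Sum.inr 0)) (e.symm (Sum.inr 1))
      (fun v => Sum.elim l (fun _ => 0) (e v)) ?_ ?_ ?_ ?_
    · intro v hv
      rw [dg_comap]
      exact (g1 _ ((hmem v).1 hv)).le
    · intro u hu v hv h
      rw [hmem] at hu hv
      rw [SimpleGraph.comap_adj] at h
      rcases hu' : e u with x | x
      · rcases hv' : e v with y | y
        · rw [hu', hv'] at h
          exact hl _ _ h
        · rw [hv'] at hv; simp [hS0] at hv
      · rw [hu'] at hu; simp [hS0] at hu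
    · intro m
      refine le_trans (le_of_eq ?_) (hm m)
      rw [← card_map (Function.Embedding.inl : W ↪ W ⊕ Fin (b + 2)), ← card_map e.symm.toEmbedding]
      congr 1
      ext v
      simp only [mem_filter, mem_map_equiv, Equiv.symm_symm]
      rcases e v with x | x <;> simp [hS0]
    · intro u hu v hv h
      rw [hmem] at hu hv
      rw [SimpleGraph.comap_adj] at h
      simp only [Equiv.eq_symm_apply]
      rcases hu' : e u with x | x
      · rw [hu'] at hu; simp [hS0] at hu
      · rcases hv' : e v with y | y
        · rw [hv'] at hv; simp [hS0] at hv
        · rw [hu', hv'] at h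
          simp only [Sum.inr.injEq]
          exact h
  · simp [hS0, hc]
  · intro v hv
    rw [dg_comap]
    exact g1 _ ((hmem v).1 hv)
  · intro v hv
    rw [hcompl, dg_comap, card_map]
    exact g2 _ ((hmem v).1 hv)
  · intro v hv
    rw [hcompl, mem_map_equiv, Equiv.symm_symm] at hv
    rw [dg_comap, card_map]
    exact g3 _ hv
  · rw [hcompl, sum_map]
    simp only [dg_comap]
    simpa using g4

end OddWheel


namespace OddWheel
open Finset Matrix
open scoped Classical
set_option linter.unusedSectionVars false
set_option linter.unusedVariables false

lemma spec_vec {n : ℕ} (hn : 1 ≤ n) (G : SimpleGraph (Fin n)) :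
    (∃ x : Fin n → ℝ, (∀ v, 0 ≤ x v) ∧ (∀ v, x v ≤ 1) ∧ (∃ v, x v = 1) ∧
      ∀ v, ∑ u ∈ nb G univ v, x u = lam1 G * x v) ∧ 2 * (edgeCount G : ℝ) ≤ lam1 G * n := by
  set A : Matrix (Fin n) (Fin n) ℝ := G.adjMatrix ℝ with hA
  have hAv : ∀ (x : Fin n → ℝ) v, (A *ᵥ x) v = ∑ u ∈ nb G univ v, x u := by
    intro x v
    rw [hA, SimpleGraph.adjMatrix_mulVec_apply]
    apply sum_congr _ fun _ _ => rfl
    ext u; simp [mem_nb]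
  have hsymm : ∀ x y : Fin n → ℝ, x ⬝ᵥ (A *ᵥ y) = y ⬝ᵥ (A *ᵥ x) := by
    intro x y
    rw [dotProduct_mulVec, dotProduct_comm, ← mulVec_transpose, hA, SimpleGraph.transpose_adjMatrix]
  have hcont : Continuous fun x : Fin n → ℝ => x ⬝ᵥ (A *ᵥ x) := by
    unfold dotProduct mulVec dotProduct
    fun_prop
  have hcont2 : Continuous fun x : Fin n → ℝ => x ⬝ᵥ x := by
    unfold dotProduct
    fun_prop
  set K : Set (Fin n → ℝ) := {x | x ⬝ᵥ x = 1} with hK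
  have hKc : IsCompact K := by
    have hcl : IsClosed K := isClosed_eq hcont2 continuous_const
    refine IsCompact.of_isClosed_subset (isCompact_univ_pi fun _ : Fin n => isCompact_Icc (a := (-1:ℝ)) (b := 1)) hcl ?_
    intro x hx i _
    have h1 : x i * x i ≤ 1 := by
      have : x i * x i ≤ ∑ j, x j * x j :=
        single_le_sum (f := fun j => x j * x j) (fun j _ => mul_self_nonneg _) (mem_univ i)
      exact this.trans (le_of_eq hx)
    constructor <;> nlinarith
  have hKn : K.Nonempty := by
    refine ⟨Pi.single ⟨0, by omega⟩ 1, ?_⟩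
    simp [hK]
  obtain ⟨x0, hx0, hmax⟩ := hKc.exists_isMaxOn hKn hcont.continuousOn
  set μ := x0 ⬝ᵥ (A *ᵥ x0) with hμ
  have hpos : ∀ y : Fin n → ℝ, y ≠ 0 → 0 < y ⬝ᵥ y := by
    intro y hy
    have h0 : 0 ≤ y ⬝ᵥ y := sum_nonneg fun i _ => mul_self_nonneg _
    refine lt_of_le_of_ne h0 fun h => hy ?_
    exact dotProduct_self_eq_zero.1 h.symm
  have hray : ∀ y : Fin n → ℝ, y ⬝ᵥ (A *ᵥ y) ≤ μ * (y ⬝ᵥ y) := by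
    intro y
    by_cases hy : y = 0
    · simp [hy]
    have hp := hpos y hy
    set r := Real.sqrt (y ⬝ᵥ y) with hr
    have hr0 : 0 < r := Real.sqrt_pos.2 hp
    have hr2 : r * r = y ⬝ᵥ y := Real.mul_self_sqrt hp.le
    have h1 : r⁻¹ • y ∈ K := by
      simp only [hK, Set.mem_setOf_eq, smul_dotProduct, dotProduct_smul, ← hr2, smul_eq_mul]
      field_simp
    have h2 : (r⁻¹ • y) ⬝ᵥ (A *ᵥ (r⁻¹ • y)) ≤ μ := hmax h1
    rw [mulVec_smul, smul_dotProduct, dotProduct_smul, smul_eq_mul, smul_eq_mul, ← mul_assoc,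
      ← mul_inv, hr2, inv_mul_le_iff₀ hp] at h2
    linarith
  set x1 : Fin n → ℝ := fun v => |x0 v| with hx1
  have hx1K : x1 ⬝ᵥ x1 = 1 := by
    rw [← show x0 ⬝ᵥ x0 = 1 from hx0]
    simp [dotProduct, hx1]
  have hx1μ : μ ≤ x1 ⬝ᵥ (A *ᵥ x1) := by
    rw [hμ]
    unfold dotProduct
    refine sum_le_sum fun v _ => ?_
    rw [hAv, hAv, mul_sum, mul_sum]
    refine sum_le_sum fun u _ => ?_
    rw [hx1, ← abs_mul]
    exact le_abs_self _
  have hx1eq : x1 ⬝ᵥ (A *ᵥ x1) = μ := le_antisymm (by have := hray x1; rwa [hx1K, mul_one] at this) hx1μ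
  have heig : A *ᵥ x1 = μ • x1 := by
    -- first variation
    have hvar : ∀ z : Fin n → ℝ, z ⬝ᵥ (A *ᵥ x1) - μ * (z ⬝ᵥ x1) ≤ 0 := by
      intro z
      set L := z ⬝ᵥ (A *ᵥ x1) - μ * (z ⬝ᵥ x1) with hL
      set Q := z ⬝ᵥ (A *ᵥ z) - μ * (z ⬝ᵥ z) with hQ
      have hineq : ∀ t : ℝ, 2 * t * L + t ^ 2 * Q ≤ 0 := by
        intro t
        have := hray (x1 + t • z)
        simp only [mulVec_add, mulVec_smul, add_dotProduct, dotProduct_add, smul_dotProduct,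
          dotProduct_smul, smul_eq_mul, hx1eq, hx1K, hsymm x1 z, dotProduct_comm x1 z] at this
        rw [hL, hQ]
        linarith
      by_contra! hcon
      have h1 := hineq (L / (|Q| + 1))
      have hq : 0 < |Q| + 1 := by positivity
      have h2 : (L / (|Q| + 1)) * (2 * L + L / (|Q| + 1) * Q) ≤ 0 := by linarith
      have h3 : L / (|Q| + 1) * Q ≥ -L := by
        rw [ge_iff_le, div_mul_eq_mul_div, le_div_iff₀ hq]
        nlinarith [neg_abs_le Q, mul_le_mul_of_nonneg_left (neg_abs_le Q) hcon.le]
      have h4 : 0 < L / (|Q| + 1) := by positivity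
      nlinarith
    ext v
    have h1 := hvar (Pi.single v 1)
    have h2 := hvar (Pi.single v (-1))
    simp only [single_dotProduct] at h1 h2
    simp only [Pi.smul_apply, smul_eq_mul]
    linarith
  have hx1ne : x1 ≠ 0 := by
    intro h
    rw [h] at hx1K
    simp at hx1K
  have hlam : lam1 G = μ := by
    have : IsGreatest {μ : ℝ | Module.End.HasEigenvalue (Matrix.toLin' A) μ} μ := by
      constructor
      · refine Module.End.hasEigenvalue_of_hasEigenvector (x := x1) ?_
        rw [Module.End.hasEigenvector_iff, Module.End.mem_eigenspace_iff]
        exact ⟨by rw [toLin'_apply]; exact heig, hx1ne⟩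
      · intro ν hν
        obtain ⟨y, hy⟩ := Module.End.HasEigenvalue.exists_hasEigenvector hν
        rw [Module.End.hasEigenvector_iff, Module.End.mem_eigenspace_iff, toLin'_apply] at hy
        have h1 := hray y
        rw [hy.1, dotProduct_smul, smul_eq_mul] at h1
        exact le_of_mul_le_mul_right h1 (hpos y hy.2)
    exact this.csSup_eq
  rw [hlam]
  refine ⟨?_, ?_⟩
  · obtain ⟨v, -, hv⟩ := exists_max_image univ x1 ⟨⟨0, by omega⟩, mem_univ _⟩
    have hvpos : 0 < x1 v := by
      by_contra! hcon
      apply hx1ne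
      ext u
      exact le_antisymm ((hv u (mem_univ u)).trans hcon) (abs_nonneg _)
    refine ⟨fun u => x1 u / x1 v, fun u => div_nonneg (abs_nonneg _) hvpos.le,
      fun u => (div_le_one hvpos).2 (hv u (mem_univ u)), ⟨v, div_self hvpos.ne'⟩, fun u => ?_⟩
    rw [← sum_div, ← hAv, heig]
    simp [mul_div_assoc]
  · have h1 := hray (fun _ => 1)
    have h2 : ((fun _ => 1 : Fin n → ℝ) ⬝ᵥ (fun _ => 1)) = n := by simp [dotProduct]
    rw [h2] at h1
    refine le_trans (le_of_eq ?_) h1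
    have h3 := two_edgeCount G
    have h4 : 2 * (edgeCount G : ℝ) = ((∑ v, dg G univ v : ℕ) : ℝ) := by exact_mod_cast h3
    rw [h4]
    push_cast
    unfold dotProduct
    refine sum_congr rfl fun v _ => ?_
    rw [hAv]
    simp [dg]

end OddWheel


namespace OddWheel
open Finset
open scoped Classical
set_option linter.unusedSectionVars false
set_option linter.unusedVariables false

variable {V : Type*} [Fintype V] [DecidableEq V]

lemma sum_nb_swap (G : SimpleGraph V) (X Y : Finset V) (x : V → ℝ) :
    ∑ v ∈ X, ∑ u ∈ nb G Y v, x u = ∑ u ∈ Y, (dg G X u : ℝ) * x u := by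
  rw [sum_comm' (s' := fun u => nb G X u) (t' := Y)]
  · refine sum_congr rfl fun u _ => ?_
    simp [dg]
  · intro v u
    rw [mem_nb, mem_nb, G.adj_comm]
    tauto

lemma sum_nb_univ (G : SimpleGraph V) (S : Finset V) (x : V → ℝ) (v : V) :
    ∑ u ∈ nb G univ v, x u = ∑ u ∈ nb G S v, x u + ∑ u ∈ nb G Sᶜ v, x u := by
  rw [← sum_union]
  · apply sum_congr _ fun _ _ => rfl
    ext u
    simp only [mem_union, mem_nb, mem_compl, mem_univ]
    tauto
  · rw [disjoint_left]
    intro u h1 h2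
    exact mem_compl.1 (mem_nb.1 h2).1 (mem_nb.1 h1).1

lemma nb_bounds (G : SimpleGraph V) (Y : Finset V) (x : V → ℝ) (h0 : ∀ v, 0 ≤ x v) (h1 : ∀ v, x v ≤ 1)
    (v : V) : 0 ≤ ∑ u ∈ nb G Y v, x u ∧ ∑ u ∈ nb G Y v, x u ≤ dg G Y v ∧
    ∑ u ∈ nb G Y v, x u ≤ ∑ u ∈ Y, x u ∧
    ∑ u ∈ Y, x u - ((Y.card : ℝ) - dg G Y v) ≤ ∑ u ∈ nb G Y v, x u := by
  refine ⟨sum_nonneg fun u _ => h0 u, ?_, ?_, ?_⟩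
  · calc _ ≤ ∑ u ∈ nb G Y v, (1:ℝ) := sum_le_sum fun u _ => h1 u
      _ = _ := by simp [dg]
  · exact sum_le_sum_of_subset_of_nonneg nb_subset fun u _ _ => h0 u
  · have e1 := sum_sdiff (f := x) (nb_subset (G := G) (X := Y) (v := v))
    have e2 : ∑ u ∈ Y \ nb G Y v, x u ≤ ((Y \ nb G Y v).card : ℝ) := by
      calc _ ≤ ∑ u ∈ Y \ nb G Y v, (1:ℝ) := sum_le_sum fun u _ => h1 u
        _ = _ := by simp
    rw [card_sdiff_of_subset nb_subset, Nat.cast_sub (card_le_card nb_subset)] at e2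
    unfold dg
    linarith

lemma weighted (Y : Finset V) (w f : V → ℝ) (X c : ℝ) (hw : ∀ v ∈ Y, 0 ≤ w v)
    (hf : ∀ v ∈ Y, |f v - X| ≤ c) : |∑ v ∈ Y, w v * f v - X * ∑ v ∈ Y, w v| ≤ c * ∑ v ∈ Y, w v := by
  have : ∑ v ∈ Y, w v * f v - X * ∑ v ∈ Y, w v = ∑ v ∈ Y, w v * (f v - X) := by
    rw [mul_sum, ← sum_sub_distrib]
    refine sum_congr rfl fun v _ => by ring
  rw [this, mul_sum]
  refine (abs_sum_le_sum_abs _ _).trans (sum_le_sum fun v hv => ?_)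
  rw [abs_mul, abs_of_nonneg (hw v hv), mul_comm]
  exact mul_le_mul_of_nonneg_right (hf v hv) (hw v hv)

lemma avg_lower (Y : Finset V) (x : V → ℝ) (lam q : ℝ) (hl : 0 < lam) (hq : 0 ≤ q) (hY : (Y.card : ℝ) ≤ 2 * lam)
    (h : ∀ v ∈ Y, lam - q ≤ lam * x v) : (Y.card : ℝ) - 2 * q ≤ ∑ v ∈ Y, x v := by
  have h1 : (Y.card : ℝ) * (lam - q) ≤ lam * ∑ v ∈ Y, x v := by
    rw [mul_sum]
    calc _ = ∑ v ∈ Y, (lam - q) := by rw [sum_const, nsmul_eq_mul]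
      _ ≤ _ := sum_le_sum h
  have h2 : lam * ((Y.card : ℝ) - 2 * q) ≤ lam * ∑ v ∈ Y, x v := by nlinarith
  exact le_of_mul_le_mul_left h2 hl

set_option maxHeartbeats 1600000 in
lemma spec_est (K C : ℕ) : ∃ N : ℕ, ∀ n : ℕ, N ≤ n → ∀ (G : SimpleGraph (Fin n)) (S : Finset (Fin n)),
    (∀ v ∈ S, dg G S v ≤ K) → (K * S.card ≤ ∑ v ∈ S, dg G S v + C) →
    (S.card * Sᶜ.card ≤ ∑ v ∈ S, dg G Sᶜ v + C) → ∑ v ∈ Sᶜ, dg G Sᶜ v ≤ 2 →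
    S.card ≤ Sᶜ.card + C → Sᶜ.card ≤ S.card + C → (n:ℝ) / 2 ≤ lam1 G →
    |lam1 G ^ 2 - K * lam1 G - (2 * edgeCount G - K * S.card - S.card * Sᶜ.card)| < 1 / 2 := by
  obtain ⟨q, hq⟩ : ∃ q : ℝ, q = K + 2 + C := ⟨_, rfl⟩
  obtain ⟨N, hN⟩ := exists_nat_gt (C + 16 * q + 4 * (12 * q) * (2 + 3 * C) + 2)
  refine ⟨N, fun n hn G S dS hD hm hE hab hba hlam => ?_⟩
  have hK0 : (0:ℝ) ≤ K := Nat.cast_nonneg _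
  have hC0 : (0:ℝ) ≤ C := Nat.cast_nonneg _
  have hq0 : 0 ≤ q := by rw [hq]; positivity
  have hnr : (C + 16 * q + 4 * (12 * q) * (2 + 3 * C) + 2 : ℝ) < n := hN.trans_le (by exact_mod_cast hn)
  have hqC : 0 ≤ 4 * (12 * q) * (2 + 3 * C) := by positivity
  have hn1 : 1 ≤ n := by
    have : (1:ℝ) ≤ n := by linarith
    exact_mod_cast this
  obtain ⟨⟨x, x0, x1, ⟨v0, hv0⟩, hx⟩, -⟩ := spec_vec hn1 G
  generalize lam1 G = lam at *
  have hl0 : 0 < lam := by linarith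
  have hsum : (S.card : ℝ) + Sᶜ.card = n := by
    have := card_add_card_compl S
    rw [Fintype.card_fin] at this
    exact_mod_cast this
  have e := two_edgeCount_split G S
  obtain ⟨T, hT⟩ : ∃ T, T = Sᶜ := ⟨_, rfl⟩
  have hxs : ∀ v, lam * x v = ∑ u ∈ nb G S v, x u + ∑ u ∈ nb G T v, x u := by
    intro v
    rw [← hx v, hT]
    exact sum_nb_univ G S x v
  have hST : ∀ v, v ∈ S ∨ v ∈ T := fun v => by rw [hT, mem_compl]; tauto
  rw [← hT] at hm hE hab hba hsum e ⊢
  obtain ⟨a, ha⟩ : ∃ a : ℝ, a = S.card := ⟨_, rfl⟩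
  obtain ⟨b, hb⟩ : ∃ b : ℝ, b = T.card := ⟨_, rfl⟩
  obtain ⟨XS, hXS⟩ : ∃ X : ℝ, X = ∑ v ∈ S, x v := ⟨_, rfl⟩
  obtain ⟨XT, hXT⟩ : ∃ X : ℝ, X = ∑ v ∈ T, x v := ⟨_, rfl⟩
  obtain ⟨E, hE'⟩ : ∃ E : ℝ, E = ∑ v ∈ T, (dg G T v : ℝ) := ⟨_, rfl⟩
  obtain ⟨m, hm'⟩ : ∃ m : ℝ, m = ∑ v ∈ S, (b - dg G T v) := ⟨_, rfl⟩
  obtain ⟨D, hD'⟩ : ∃ D : ℝ, D = ∑ v ∈ S, ((K:ℝ) - dg G S v) := ⟨_, rfl⟩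
  have hm2 : m = ∑ v ∈ T, (a - dg G S v) := by
    have h1 := sum_miss G S T
    have h2 := sum_miss G T S
    rw [sum_dg_comm G T S] at h2
    rw [hm', ha, hb, h1, h2]; ring
  have hE2 : E ≤ 2 := by rw [hE']; exact_mod_cast hE
  have hmC : m ≤ C := by
    rw [hm', hb, sum_miss]
    have : (S.card * T.card : ℝ) ≤ ((∑ v ∈ S, dg G T v : ℕ) : ℝ) + C := by exact_mod_cast hm
    linarith
  have hDC : D ≤ C := by
    rw [hD', sum_sub_distrib]
    have : (K * S.card : ℝ) ≤ ∑ v ∈ S, (dg G S v : ℝ) + C := by exact_mod_cast hD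
    simp only [sum_const, nsmul_eq_mul]
    linarith
  have wS : ∀ v, 0 ≤ b - dg G T v := fun v => by
    rw [hb, sub_nonneg]; exact_mod_cast (dg_le_card : dg G T v ≤ T.card)
  have wT : ∀ v, 0 ≤ a - dg G S v := fun v => by
    rw [ha, sub_nonneg]; exact_mod_cast (dg_le_card : dg G S v ≤ S.card)
  have wD : ∀ v ∈ S, 0 ≤ (K:ℝ) - dg G S v := fun v hv => by
    rw [sub_nonneg]; exact_mod_cast dS v hv
  have wE : ∀ v ∈ T, (dg G T v : ℝ) ≤ 2 := fun v hv => by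
    refine le_trans ?_ hE2
    rw [hE']
    exact single_le_sum (f := fun v => (dg G T v : ℝ)) (fun _ _ => Nat.cast_nonneg _) hv
  have m0 : 0 ≤ m := by rw [hm']; exact sum_nonneg fun v _ => wS v
  have D0 : 0 ≤ D := by rw [hD']; exact sum_nonneg wD
  have E0 : 0 ≤ E := by rw [hE']; exact sum_nonneg fun v _ => Nat.cast_nonneg _
  have mS : ∀ v ∈ S, b - dg G T v ≤ C := fun v hv => by
    refine le_trans ?_ hmC
    rw [hm']
    exact single_le_sum (f := fun v => b - (dg G T v : ℝ)) (fun _ _ => wS _) hv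
  have mT : ∀ v ∈ T, a - dg G S v ≤ C := fun v hv => by
    refine le_trans ?_ hmC
    rw [hm2]
    exact single_le_sum (f := fun v => a - (dg G S v : ℝ)) (fun _ _ => wT _) hv
  have habr : a ≤ b + C := by rw [ha, hb]; exact_mod_cast hab
  have hbar : b ≤ a + C := by rw [ha, hb]; exact_mod_cast hba
  rw [← ha, ← hb] at hsum
  have a0 : 0 ≤ a := by rw [ha]; positivity
  have b0 : 0 ≤ b := by rw [hb]; positivity
  -- local bounds
  have bS : ∀ v ∈ S, XT - C ≤ lam * x v ∧ lam * x v ≤ XT + K := by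
    intro v hv
    obtain ⟨p1, p2, p3, p4⟩ := nb_bounds G S x x0 x1 v
    obtain ⟨q1, q2, q3, q4⟩ := nb_bounds G T x x0 x1 v
    rw [hxs v]
    rw [← hXT] at q3 q4
    rw [← hb] at q4
    have := wD v hv
    have := mS v hv
    constructor <;> linarith
  have bT : ∀ v ∈ T, XS - C ≤ lam * x v ∧ lam * x v ≤ XS + 2 := by
    intro v hv
    obtain ⟨p1, p2, p3, p4⟩ := nb_bounds G S x x0 x1 v
    obtain ⟨q1, q2, q3, q4⟩ := nb_bounds G T x x0 x1 v
    rw [hxs v]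
    rw [← hXS] at p3 p4
    rw [← ha] at p4
    have := wE v hv
    have := mT v hv
    constructor <;> linarith
  have hXSa : XS ≤ a := by
    rw [hXS, ha]
    calc _ ≤ ∑ v ∈ S, (1:ℝ) := sum_le_sum fun u _ => x1 u
      _ = _ := by simp
  have hXTb : XT ≤ b := by
    rw [hXT, hb]
    calc _ ≤ ∑ v ∈ T, (1:ℝ) := sum_le_sum fun u _ => x1 u
      _ = _ := by simp
  have hlq : lam ≤ a + q ∧ lam ≤ b + q := by
    rcases hST v0 with h | h
    · have := (bS v0 h).2
      rw [hv0] at this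
      constructor <;> linarith
    · have := (bT v0 h).2
      rw [hv0] at this
      constructor <;> linarith
  have ha2 : (S.card : ℝ) ≤ 2 * lam := by rw [← ha]; linarith
  have hb2 : (T.card : ℝ) ≤ 2 * lam := by rw [← hb]; linarith
  have key : ∀ v, lam - 4 * q ≤ lam * x v := by
    rcases hST v0 with h | h
    · have h1 := (bS v0 h).2
      rw [hv0] at h1
      have h2 : ∀ v ∈ S, lam - q ≤ lam * x v := fun v hv => by
        have := (bS v hv).1
        linarith
      have h3 := avg_lower S x lam q hl0 hq0 ha2 h2
      rw [← hXS, ← ha] at h3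
      intro v
      rcases hST v with hv | hv
      · have := h2 v hv; linarith
      · have := (bT v hv).1
        linarith
    · have h1 := (bT v0 h).2
      rw [hv0] at h1
      have h2 : ∀ v ∈ T, lam - q ≤ lam * x v := fun v hv => by
        have := (bT v hv).1
        linarith
      have h3 := avg_lower T x lam q hl0 hq0 hb2 h2
      rw [← hXT, ← hb] at h3
      intro v
      rcases hST v with hv | hv
      · have := (bS v hv).1
        linarith
      · have := h2 v hv; linarith
  have hXSl : a - 8 * q ≤ XS := by
    have := avg_lower S x lam (4 * q) hl0 (by linarith) ha2 fun v _ => key v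
    rw [← hXS, ← ha] at this
    linarith
  have fl : ∀ v, |lam * x v - XS| ≤ 12 * q := by
    intro v
    have h1 := key v
    have h2 : lam * x v ≤ lam := mul_le_of_le_one_right hl0.le (x1 v)
    rw [abs_le]
    constructor <;> linarith
  have fa : ∀ v, |a * x v - XS| ≤ 12 * q := by
    intro v
    have h1 := key v
    have h2 : a * x v ≤ a := mul_le_of_le_one_right a0 (x1 v)
    have h3 : a - 8 * q ≤ a * x v := by
      have : lam * (a - 8 * q) ≤ lam * (a * x v) := by
        have := mul_le_mul_of_nonneg_left h1 a0
        rw [← ha] at ha2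
        have h5 := mul_le_mul_of_nonneg_left ha2 hq0
        linarith only [this, h5]
      exact le_of_mul_le_mul_left this hl0
    rw [abs_le]
    constructor <;> linarith
  -- the identity
  have i1 : lam * XS = ∑ v ∈ S, (dg G S v : ℝ) * x v + ∑ v ∈ T, (dg G S v : ℝ) * x v := by
    rw [← sum_nb_swap, ← sum_nb_swap, ← sum_add_distrib, hXS, mul_sum]
    exact sum_congr rfl fun v _ => hxs v
  have i2 : lam * XT = ∑ v ∈ S, (dg G T v : ℝ) * x v + ∑ v ∈ T, (dg G T v : ℝ) * x v := by
    rw [← sum_nb_swap, ← sum_nb_swap, ← sum_add_distrib, hXT, mul_sum]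
    exact sum_congr rfl fun v _ => hxs v
  have w1 := weighted S (fun v => (K:ℝ) - dg G S v) (fun v => lam * x v) XS (12 * q) wD fun v _ => fl v
  have w2 := weighted T (fun v => a - dg G S v) (fun v => lam * x v) XS (12 * q) (fun v _ => wT v) fun v _ => fl v
  have w3 := weighted S (fun v => b - dg G T v) (fun v => a * x v) XS (12 * q) (fun v _ => wS v) fun v _ => fa v
  have w4 := weighted T (fun v => (dg G T v : ℝ)) (fun v => a * x v) XS (12 * q) (fun v _ => Nat.cast_nonneg _) fun v _ => fa v
  rw [← hD'] at w1
  rw [← hm2] at w2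
  rw [← hm'] at w3
  rw [← hE'] at w4
  have s1 : ∑ v ∈ S, ((K:ℝ) - dg G S v) * (lam * x v) = lam * (K * XS - ∑ v ∈ S, (dg G S v : ℝ) * x v) := by
    rw [hXS, mul_sum, ← sum_sub_distrib, mul_sum]
    exact sum_congr rfl fun v _ => by ring
  have s2 : ∑ v ∈ T, (a - dg G S v) * (lam * x v) = lam * (a * XT - ∑ v ∈ T, (dg G S v : ℝ) * x v) := by
    rw [hXT, mul_sum, ← sum_sub_distrib, mul_sum]
    exact sum_congr rfl fun v _ => by ring
  have s3 : ∑ v ∈ S, (b - dg G T v) * (a * x v) = a * (b * XS - ∑ v ∈ S, (dg G T v : ℝ) * x v) := by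
    rw [hXS, mul_sum, ← sum_sub_distrib, mul_sum]
    exact sum_congr rfl fun v _ => by ring
  have s4 : ∑ v ∈ T, (dg G T v : ℝ) * (a * x v) = a * ∑ v ∈ T, (dg G T v : ℝ) * x v := by
    rw [mul_sum]
    exact sum_congr rfl fun v _ => by ring
  rw [s1] at w1
  rw [s2] at w2
  rw [s3] at w3
  rw [s4] at w4
  generalize ∑ v ∈ S, (dg G S v : ℝ) * x v = y1 at *
  generalize ∑ v ∈ T, (dg G S v : ℝ) * x v = y2 at *
  generalize ∑ v ∈ S, (dg G T v : ℝ) * x v = y3 at *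
  generalize ∑ v ∈ T, (dg G T v : ℝ) * x v = y4 at *
  have hP : (lam ^ 2 - K * lam - a * b) * XS = a * y4 - a * (b * XS - y3) - lam * (K * XS - y1) -
      lam * (a * XT - y2) := by
    have : lam ^ 2 * XS = lam * (y1 + y2) := by rw [← i1]; ring
    have h2 : a * (lam * XT) = a * (y3 + y4) := by rw [i2]
    linear_combination this + h2
  have h2e : 2 * (edgeCount G : ℝ) - K * a - a * b = a * b + (E - 2 * m - D) := by
    have e' : 2 * (edgeCount G : ℝ) = ∑ v ∈ S, (dg G S v : ℝ) + ∑ v ∈ T, (dg G T v : ℝ) +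
      2 * ∑ v ∈ S, (dg G T v : ℝ) := by exact_mod_cast e
    rw [e', hE', hm', hD', sum_sub_distrib, sum_sub_distrib]
    simp only [sum_const, nsmul_eq_mul, ← ha]
    ring
  rw [← ha, ← hb, h2e]
  have hfin : |(lam ^ 2 - K * lam - (a * b + (E - 2 * m - D))) * XS| ≤ 12 * q * (2 + 3 * C) := by
    have e1 : (lam ^ 2 - K * lam - (a * b + (E - 2 * m - D))) * XS =
      (lam ^ 2 - K * lam - a * b) * XS - XS * (E - 2 * m - D) := by ring
    rw [e1, hP]
    rw [abs_le] at w1 w2 w3 w4 ⊢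
    have : 12 * q * D + 12 * q * m + 12 * q * m + 12 * q * E ≤ 12 * q * (2 + 3 * C) := by
      have : 12 * q * (D + m + m + E) ≤ 12 * q * (2 + 3 * C) :=
        mul_le_mul_of_nonneg_left (by linarith) (by linarith)
      linarith
    constructor <;> linarith
  have hXSpos : 2 * (12 * q * (2 + 3 * C)) < XS := by linarith
  have hXS0 : 0 < XS := by
    have : 0 ≤ 12 * q * (2 + 3 * (C:ℝ)) := by positivity
    linarith
  rw [abs_mul, abs_of_pos hXS0] at hfin
  by_contra! hcon
  have h6 := mul_le_mul_of_nonneg_right hcon hXS0.le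
  linarith only [h6, hfin, hXSpos]

end OddWheel


namespace OddWheel
open Finset
open scoped Classical
set_option linter.unusedSectionVars false
set_option linter.unusedVariables false

lemma arith_bounds (K a b s t c : ℤ) (hK : 0 ≤ K) (hs : s ≤ K * a) (ht : t ≤ 2) (hc : c ≤ a * b)
    (h : (a + b) ^ 2 + K * (a + b) ≤ 2 * (s + t + 2 * c)) :
    a ≤ b + (K ^ 2 + 2 * K + 4) ∧ b ≤ a + (K ^ 2 + 2 * K + 4) ∧
    K * a ≤ s + (K ^ 2 + 2 * K + 4) ∧ a * b ≤ c + (K ^ 2 + 2 * K + 4) := by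
  obtain ⟨d, hd⟩ : ∃ d, d = a - b := ⟨_, rfl⟩
  have ha : a = b + d := by linarith
  subst ha
  have h1 : d ^ 2 + 2 * (K * (b + d) - s) + 4 * ((b + d) * b - c) ≤ K * d + 4 := by
    nlinarith
  have h2 : d ^ 2 ≤ K * d + 4 := by linarith
  have h3 : d ≤ K + 2 := by nlinarith
  have h4 : -(K + 2) ≤ d := by nlinarith
  have h5 : K * d ≤ K * (K + 2) := mul_le_mul_of_nonneg_left h3 hK
  have h6 : 0 ≤ K ^ 2 := sq_nonneg K
  have h7 : 0 ≤ d ^ 2 := sq_nonneg d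
  refine ⟨by linarith, by linarith, by linarith, by linarith⟩

lemma lam_half {n : ℕ} (hn : 1 ≤ n) (G : SimpleGraph (Fin n)) (h : n ^ 2 ≤ 4 * edgeCount G) :
    (n : ℝ) / 2 ≤ lam1 G := by
  have h1 := (spec_vec hn G).2
  have h2 : (n:ℝ) ^ 2 ≤ 4 * edgeCount G := by exact_mod_cast h
  have hn0 : (0:ℝ) < n := by exact_mod_cast hn
  nlinarith

lemma half_arith (K a b : ℕ) (h1 : a ≤ b + (K + 1)) (h2 : b ≤ a + (K + 1))
    (hn : 4 * (K + 1) * (K + 3) ≤ a + b) (hK : 6 ≤ K) :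
    (a + b) ^ 2 ≤ 2 * (K * a + 2 + 2 * (a * b)) := by
  have h5 : (a + b) ^ 2 ≤ 4 * (a * b) + (K + 1) * (K + 1) := by
    rcases le_total a b with h | h
    · obtain ⟨d, rfl⟩ := Nat.exists_eq_add_of_le h
      have hd : d ≤ K + 1 := by omega
      have := Nat.mul_le_mul hd hd
      linarith
    · obtain ⟨d, rfl⟩ := Nat.exists_eq_add_of_le h
      have hd : d ≤ K + 1 := by omega
      have := Nat.mul_le_mul hd hd
      linarith
  have h6 : (K + 1) * (K + 1) ≤ a := by nlinarith
  have h8 : 1 * a ≤ K * a := Nat.mul_le_mul_right a (by omega)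
  linarith

set_option maxHeartbeats 800000 in
lemma core (K : ℕ) (hK : 6 ≤ K) : ∃ N : ℕ, ∀ n : ℕ, N ≤ n → ∀ G : SimpleGraph (Fin n),
    IsSpexWheel (2 * (K + 1) + 1) G → IsExWheel (2 * (K + 1) + 1) G →
    ∃ a b : ℕ, a + b = n ∧ ∀ a' b' : ℕ, a' + b' = n → (Even a' ∨ Odd (K + 1)) → a' ≤ b' + (K + 1) →
      b' ≤ a' + (K + 1) → a' * b' ≤ a * b ∧ 2 * (a' * b') + K * a' ≤ 2 * (a * b) + K * a := by
  obtain ⟨N1, C0, h1⟩ := struct (K + 1) (by omega)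
  obtain ⟨N2, h2⟩ := spec_est K (K ^ 2 + 2 * K + 4)
  refine ⟨N1 + N2 + 4 * (K + 1) * (K + 3) + 10 * K + 10, fun n hn G hS hE => ?_⟩
  have hn1 : 1 ≤ n := by omega
  -- the comparison graphs
  have hH : ∀ a' b' : ℕ, a' + b' = n → (Even a' ∨ Odd (K + 1)) → a' ≤ b' + (K + 1) →
      b' ≤ a' + (K + 1) → ∃ (H : SimpleGraph (Fin n)), WheelFree (2 * (K + 1) + 1) H ∧
        2 * edgeCount H = K * a' + 2 + 2 * (a' * b') ∧ ((n:ℝ) / 2 ≤ lam1 H →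
        |lam1 H ^ 2 - K * lam1 H - (2 * edgeCount H - K * a' - a' * b')| < 1 / 2) := by
    intro a' b' hab hp h3 h4
    have hbig : (K + 1) * (K + 1 + 2) ≤ a' := by nlinarith
    obtain ⟨H, S, hW, hc, p1, p2, p3, p4⟩ := exists_H (K + 1) (by omega) n a' hbig (by omega) hp
    have hc' : Sᶜ.card = b' := by
      have := card_add_card_compl S
      rw [Fintype.card_fin] at this
      omega
    simp only [Nat.add_sub_cancel] at p1
    have e1 : ∑ v ∈ S, dg H S v = K * a' := by
      rw [sum_congr rfl p1, sum_const, hc, smul_eq_mul, mul_comm]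
    have e2 : ∑ v ∈ S, dg H Sᶜ v = a' * b' := by
      rw [sum_congr rfl p2, sum_const, hc, smul_eq_mul, hc']
    have e := two_edgeCount_split H S
    rw [e1, e2, p4] at e
    refine ⟨H, hW, e, fun hl => ?_⟩
    have := h2 n (by omega) H S (fun v hv => (p1 v hv).le) (by rw [e1, hc]; omega)
      (by rw [e2, hc, hc']; omega) p4.le (by rw [hc, hc']; nlinarith) (by rw [hc, hc']; nlinarith) hl
    rwa [hc, hc'] at this
  have hlow : ∃ a'' b'' : ℕ, a'' + b'' = n ∧ (Even a'' ∨ Odd (K + 1)) ∧ a'' ≤ b'' + 3 ∧ b'' ≤ a'' := by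
    rcases Nat.even_or_odd ((n + 1) / 2) with h | h
    · exact ⟨(n + 1) / 2, n - (n + 1) / 2, by omega, Or.inl h, by omega, by omega⟩
    · exact ⟨(n + 1) / 2 + 1, n - ((n + 1) / 2 + 1), by omega, Or.inl h.add_one, by omega, by omega⟩
  have h4e : n ^ 2 + K * n ≤ 4 * edgeCount G := by
    obtain ⟨a, b, hab, hp, g1, g2⟩ := hlow
    obtain ⟨H, hW, he, -⟩ := hH a b hab hp (by omega) (by omega)
    have hle := hE.2 H hW
    obtain ⟨d, rfl⟩ := Nat.exists_eq_add_of_le g2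
    have hd : d ≤ 3 := by omega
    have : n ^ 2 + K * n ≤ 4 * edgeCount H := by
      have h5 : d * d ≤ K * d := Nat.mul_le_mul_right d (by omega)
      generalize edgeCount H = eH at he hle ⊢
      rw [← hab]
      nlinarith
    omega
  obtain ⟨S, s1, -, -, s4, -, -⟩ := h1 n (by omega) G hE (by simpa using h4e)
  simp only [Nat.add_sub_cancel] at s1
  obtain ⟨a, ha⟩ : ∃ a, a = S.card := ⟨_, rfl⟩
  obtain ⟨b, hb⟩ : ∃ b, b = Sᶜ.card := ⟨_, rfl⟩
  have hab : a + b = n := by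
    have := card_add_card_compl S
    rw [Fintype.card_fin] at this
    omega
  have e := two_edgeCount_split G S
  have hs : ∑ v ∈ S, dg G S v ≤ K * a := by
    calc _ ≤ ∑ v ∈ S, K := sum_le_sum s1
      _ = _ := by rw [sum_const, smul_eq_mul, ha, mul_comm]
  have hc : ∑ v ∈ S, dg G Sᶜ v ≤ a * b := by
    calc _ ≤ ∑ v ∈ S, b := sum_le_sum fun v _ => by rw [hb]; exact dg_le_card
      _ = _ := by rw [sum_const, smul_eq_mul, ha]
  have hbd := arith_bounds K a b (∑ v ∈ S, dg G S v : ℕ) (∑ v ∈ Sᶜ, dg G Sᶜ v : ℕ) (∑ v ∈ S, dg G Sᶜ v : ℕ)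
    (by positivity) (by exact_mod_cast hs) (by exact_mod_cast s4) (by exact_mod_cast hc)
    (by
      generalize edgeCount G = eG at h4e e
      rw [← hab] at h4e; norm_cast; omega)
  norm_cast at hbd
  obtain ⟨b1, b2, b3, b4⟩ := hbd
  have hlG : (n:ℝ) / 2 ≤ lam1 G := lam_half hn1 G (by nlinarith)
  have estG := h2 n (by omega) G S s1 (by rw [← ha]; exact b3) (by rw [← ha, ← hb]; exact b4) s4
    (by rw [← ha, ← hb]; exact b1) (by rw [← ha, ← hb]; exact b2) hlG
  rw [← ha, ← hb] at estG
  have heG : 2 * edgeCount G ≤ K * a + 2 + 2 * (a * b) := by omega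
  refine ⟨a, b, hab, fun a' b' hab' hp g1 g2 => ?_⟩
  obtain ⟨H, hW, he, hest⟩ := hH a' b' hab' hp g1 g2
  have hle := hE.2 H hW
  refine ⟨?_, by omega⟩
  by_cases hlH : (n:ℝ) / 2 ≤ lam1 H
  · have est := hest hlH
    have hll := hS.2 H hW
    have hKn : (K:ℝ) ≤ n / 2 := by
      have : (10 * K : ℝ) ≤ n := by exact_mod_cast (by omega : 10 * K ≤ n)
      have : (0:ℝ) ≤ K := Nat.cast_nonneg _
      linarith
    have hmono : lam1 H ^ 2 - K * lam1 H ≤ lam1 G ^ 2 - K * lam1 G := by nlinarith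
    rw [abs_lt] at est estG
    have heR : 2 * (edgeCount H : ℝ) = K * a' + 2 + 2 * (a' * b') := by exact_mod_cast he
    have heGR : 2 * (edgeCount G : ℝ) ≤ K * a + 2 + 2 * (a * b) := by exact_mod_cast heG
    have : (a' * b' : ℝ) < a * b + 1 := by linarith
    have : a' * b' < a * b + 1 := by exact_mod_cast this
    omega
  · exfalso
    apply hlH
    refine lam_half hn1 H ?_
    have h7 := half_arith K a' b' g1 g2 (by omega) hK
    generalize edgeCount H = eH at he ⊢
    rw [← hab']
    omega

lemma core_contra (k a b n : ℕ) (hk : k = 7 ∨ 9 ≤ k) (hn : 10 * k + 100 ≤ n) (hab : a + b = n)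
    (h : ∀ a' b' : ℕ, a' + b' = n → (Even a' ∨ Odd k) → a' ≤ b' + k →
      b' ≤ a' + k → a' * b' ≤ a * b ∧ 2 * (a' * b') + (k - 1) * a' ≤ 2 * (a * b) + (k - 1) * a) : False := by
  -- reformulate in terms of p = a - b
  have key : ∀ p : ℤ, |p| ≤ 6 → Even ((n:ℤ) + p) → (Even (((n:ℤ) + p) / 2) ∨ Odd k) →
      ((a:ℤ) - b) ^ 2 ≤ p ^ 2 ∧
      p * (k - 1 - p) ≤ ((a:ℤ) - b) * (k - 1 - (a - b)) := by
    intro p hp hev hpar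
    rw [abs_le] at hp
    obtain ⟨m, hm⟩ := hev
    have hm2 : ((n:ℤ) + p) / 2 = m := by omega
    rw [hm2] at hpar
    have hm0 : 0 ≤ m := by omega
    lift m to ℕ using hm0
    obtain ⟨m', hm'⟩ : ∃ m' : ℕ, m + m' = n := ⟨n - m, by omega⟩
    obtain ⟨h1, h2⟩ := h m m' hm' (by
      rcases hpar with h | h
      · left; exact_mod_cast h
      · right; exact h) (by omega) (by omega)
    obtain ⟨K, rfl⟩ : ∃ K, k = K + 1 := ⟨k - 1, by omega⟩
    simp only [Nat.add_sub_cancel] at h2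
    zify at h1 h2 hm' hab
    push_cast
    have e1 : p = m - m' := by omega
    have e2 : (m:ℤ) = a + b - m' := by omega
    have e3 : (m':ℤ) = a + b - m := by omega
    subst e1
    constructor
    · have : ((a:ℤ) + b) ^ 2 = (m + m') ^ 2 := by rw [hab, hm']
      nlinarith
    · have : ((a:ℤ) + b) ^ 2 = (m + m') ^ 2 := by rw [hab, hm']
      have h7 : (K:ℤ) * (a + b) = K * (m + m') := by rw [hab, hm']
      nlinarith
  obtain ⟨d, hd⟩ : ∃ d : ℤ, d = a - b := ⟨_, rfl⟩
  rw [← hd] at key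
  have dpar : (n - d) % 2 = 0 := by omega
  have hkz : (7:ℤ) ≤ k := by omega
  have bd : ∀ r : ℤ, 0 ≤ r → d ^ 2 ≤ r ^ 2 → -r ≤ d ∧ d ≤ r := fun r hr h => abs_le.1 (abs_le_of_sq_le_sq h hr) 
  rcases Nat.even_or_odd k with hke | hko
  · have hk10 : (10:ℤ) ≤ k := by
      rcases hke with ⟨c, hc⟩
      omega
    have hd2 : -2 ≤ d ∧ d ≤ 2 := by
      have hcase : (n % 4 = 0 ∨ n % 4 = 2) ∨ n % 4 = 1 ∨ n % 4 = 3 := by omega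
      rcases hcase with (h0 | h0) | h0 | h0
      · have := bd 0 (by norm_num) (key 0 (by norm_num) (by rw [Int.even_iff]; omega)
          (Or.inl (by rw [Int.even_iff]; omega))).1
        omega
      · exact bd 2 (by norm_num) (key 2 (by norm_num) (by rw [Int.even_iff]; omega)
          (Or.inl (by rw [Int.even_iff]; omega))).1
      · have := bd 1 (by norm_num) (by simpa using (key (-1) (by norm_num) (by rw [Int.even_iff]; omega)
          (Or.inl (by rw [Int.even_iff]; omega))).1)
        omega
      · have := bd 1 (by norm_num) (key 1 (by norm_num) (by rw [Int.even_iff]; omega)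
          (Or.inl (by rw [Int.even_iff]; omega))).1
        omega
    have hbest : ∃ p : ℤ, 3 ≤ p ∧ p ≤ 6 ∧ p * (k - 1 - p) ≤ d * (k - 1 - d) := by
      have hcase : (n % 4 = 0 ∨ n % 4 = 2) ∨ n % 4 = 1 ∨ n % 4 = 3 := by omega
      rcases hcase with (h0 | h0) | h0 | h0
      · exact ⟨4, by norm_num, by norm_num, (key 4 (by norm_num) (by rw [Int.even_iff]; omega)
          (Or.inl (by rw [Int.even_iff]; omega))).2⟩
      · exact ⟨6, by norm_num, by norm_num, (key 6 (by norm_num) (by rw [Int.even_iff]; omega)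
          (Or.inl (by rw [Int.even_iff]; omega))).2⟩
      · exact ⟨3, by norm_num, by norm_num, (key 3 (by norm_num) (by rw [Int.even_iff]; omega)
          (Or.inl (by rw [Int.even_iff]; omega))).2⟩
      · exact ⟨5, by norm_num, by norm_num, (key 5 (by norm_num) (by rw [Int.even_iff]; omega)
          (Or.inl (by rw [Int.even_iff]; omega))).2⟩
    obtain ⟨p, p1, p2, p3⟩ := hbest
    clear key h bd
    obtain ⟨d1, d2⟩ := hd2
    clear hd dpar
    interval_cases p <;> interval_cases d <;> omega
  · rcases Nat.even_or_odd n with hne | hno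
    · rw [Nat.even_iff] at hne
      have h1 := bd 0 (by norm_num) (key 0 (by norm_num) (by rw [Int.even_iff]; omega) (Or.inr hko)).1
      have h2 := (key 4 (by norm_num) (by rw [Int.even_iff]; omega) (Or.inr hko)).2
      have h3 : d = 0 := by omega
      rw [h3] at h2
      omega
    · rw [Nat.odd_iff] at hno
      obtain ⟨d1, d2⟩ := bd 1 (by norm_num) (key 1 (by norm_num) (by rw [Int.even_iff]; omega) (Or.inr hko)).1
      have h2 := (key 3 (by norm_num) (by rw [Int.even_iff]; omega) (Or.inr hko)).2
      clear key h bd hd dpar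
      interval_cases d <;> omega

end OddWheel

/-- For `k = 7` or `k ≥ 9` and `n` large,
`SPEX(n, W_{2k+1}) ∩ EX(n, W_{2k+1}) = ∅`. -/
theorem spex_inter_ex_empty (k : ℕ) (hk : k = 7 ∨ 9 ≤ k) :
    ∃ N : ℕ, ∀ n : ℕ, N ≤ n → ∀ G : SimpleGraph (Fin n),
      ¬ (IsSpexWheel (2 * k + 1) G ∧ IsExWheel (2 * k + 1) G) := by
  obtain ⟨N, hN⟩ := OddWheel.core (k - 1) (by omega)
  have hk1 : k - 1 + 1 = k := by omega
  rw [hk1] at hN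
  refine ⟨N + 10 * k + 100, fun n hn G hG => ?_⟩
  obtain ⟨a, b, hab, h⟩ := hN n (by omega) G hG.1 hG.2
  exact OddWheel.core_contra k a b n hk (by omega) hab h
end

section
/- Let k ≥ 2 be an integer and ε > 0. For all sufficiently large n (depending on k and ε), if G is an n-vertex W_{2k+1}-free simple graph attaining the maximum spectral radius among all n-vertex W_{2k+1}-free graphs, and V(G) = S ⊔ T is a maximum cut of G, then the number of edges between S and T satisfies e(S,T) ≥ (1/4 − ε)n², and moreover (1/2 − √ε)n ≤ |S| ≤ (1/2 + √ε)n and (1/2 − √ε)n ≤ |T| ≤ (1/2 + √ε)n. -/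
open Finset in
lemma card_noninj (n m : ℕ) :
    (((univ : Finset (Fin (m+1) → Fin n)).filter fun f => ¬ Function.Injective f).card)
      ≤ (m+1)^2 * n^m := by
  classical
  have hsub : ((univ : Finset (Fin (m+1) → Fin n)).filter fun f => ¬ Function.Injective f)
      ⊆ ((univ : Finset (Fin (m+1) × Fin (m+1))).filter fun p => p.1 ≠ p.2).biUnion
        fun p => univ.filter fun f : Fin (m+1) → Fin n => f p.1 = f p.2 := by
    intro f hf
    simp only [mem_filter, mem_univ, true_and, Function.Injective, not_forall] at hf
    obtain ⟨a, b, hab, hne⟩ := hf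
    simp only [mem_biUnion, mem_filter, mem_univ, true_and]
    exact ⟨(a, b), hne, hab⟩
  refine (card_le_card hsub).trans ?_
  have h2 : (((univ : Finset (Fin (m+1) × Fin (m+1))).filter fun p => p.1 ≠ p.2).card)
      ≤ (m+1)^2 := by
    refine (card_filter_le _ _).trans ?_
    simp [sq]
  refine (card_biUnion_le_card_mul _ _ (n^m) ?_).trans (Nat.mul_le_mul_right _ h2)
  intro p hp
  simp only [mem_filter, mem_univ, true_and] at hp
  have : (univ.filter fun f : Fin (m+1) → Fin n => f p.1 = f p.2).card
      ≤ (univ : Finset (Fin m → Fin n)).card := by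
    refine card_le_card_of_injOn (fun f i => f (p.2.succAbove i)) (fun _ _ => mem_univ _) ?_
    intro f hf g hg hfg
    simp only [coe_filter, mem_univ, true_and, Set.mem_ofPred_eq] at hf hg
    have hne : ∀ x, x ≠ p.2 → f x = g x := by
      intro x hx
      obtain ⟨y, rfl⟩ := Fin.exists_succAbove_eq hx
      exact congrFun hfg y
    funext x
    by_cases hx : x = p.2
    · rw [hx, ← hf, ← hg]; exact hne _ hp
    · exact hne x hx
  simpa using this

open Finset in
lemma kst_aux (n m : ℕ) (G : SimpleGraph (Fin n)) [DecidableRel G.Adj] (A : Finset (Fin n))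
    (δ : ℝ) (hδ : 0 < δ) (hn : ((m:ℝ)+1) + ((m:ℝ)+1)^2 < δ^(m+1) * n)
    (h : δ * (n:ℝ)^2 ≤ ∑ v ∈ A, ((A.filter fun w => G.Adj v w).card : ℝ)) :
    ∃ f g : Fin (m+1) → Fin n, Function.Injective f ∧ Function.Injective g ∧
      (∀ i, f i ∈ A) ∧ (∀ i, g i ∈ A) ∧ ∀ i j, G.Adj (f i) (g j) := by
  classical
  by_contra hcon
  have hn0 : (0:ℝ) < n := by
    by_contra h0
    have : (n:ℝ) = 0 := le_antisymm (not_lt.mp h0) (Nat.cast_nonneg _)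
    rw [this, mul_zero] at hn
    have : (0:ℝ) < ((m:ℝ)+1) + ((m:ℝ)+1)^2 := by positivity
    linarith
  have hcnt : ∀ f : Fin (m+1) → Fin n, Function.Injective f →
      ((A.filter fun v => ∀ i, f i ∈ A ∧ G.Adj v (f i)).card) ≤ m+1 := by
    intro f hf
    by_contra hlt
    push Not at hlt
    obtain ⟨s, hs, hsc⟩ := exists_subset_card_eq hlt.le
    apply hcon
    have e : Fin (m+1) ≃ s := (Fintype.equivFinOfCardEq (by simpa using hsc)).symm
    have hmem : ∀ i, (e i : Fin n) ∈ A ∧ ∀ j, f j ∈ A ∧ G.Adj (e i) (f j) := by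
      intro i
      have := hs (e i).2
      simpa using this
    refine ⟨fun i => e i, f, Subtype.val_injective.comp e.injective, hf, fun i => (hmem i).1,
      fun j => ((hmem 0).2 j).1, fun i j => ((hmem i).2 j).2⟩
  have hdc : ∑ v ∈ A, ((A.filter fun w => G.Adj v w).card)^(m+1)
      = ∑ f : Fin (m+1) → Fin n, (A.filter fun v => ∀ i, f i ∈ A ∧ G.Adj v (f i)).card := by
    have := sum_card_bipartiteAbove_eq_sum_card_bipartiteBelow (s := A)
      (t := (univ : Finset (Fin (m+1) → Fin n))) (fun v f => ∀ i, f i ∈ A ∧ G.Adj v (f i))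
    unfold bipartiteAbove bipartiteBelow at this
    rw [← this]
    refine sum_congr rfl fun v _ => ?_
    have : (univ.filter fun f : Fin (m+1) → Fin n => ∀ i, f i ∈ A ∧ G.Adj v (f i))
      = Fintype.piFinset (fun _ : Fin (m+1) => A.filter fun w => G.Adj v w) := by
      ext f; simp [Fintype.mem_piFinset]
    rw [this, Fintype.card_piFinset]
    simp
  have hup : ∑ f : Fin (m+1) → Fin n, (A.filter fun v => ∀ i, f i ∈ A ∧ G.Adj v (f i)).card
      ≤ (m+1) * n^(m+1) + (m+1)^2 * n^m * n := by
    calc _ ≤ ∑ f : Fin (m+1) → Fin n, ((m+1) + if ¬ Function.Injective f then n else 0) := by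
          refine sum_le_sum fun f _ => ?_
          by_cases hf : Function.Injective f
          · have := hcnt f hf
            simp only [hf, not_true_eq_false, if_false]
            omega
          · simp only [hf, not_false_eq_true, if_true]
            have := card_le_univ (A.filter fun v => ∀ i, f i ∈ A ∧ G.Adj v (f i))
            rw [Fintype.card_fin] at this
            omega
      _ = (m+1) * n^(m+1) +
          (((univ : Finset (Fin (m+1) → Fin n)).filter fun f => ¬ Function.Injective f).card) * n := by
          rw [sum_add_distrib, ← sum_filter, sum_const, sum_const]
          simp [mul_comm]
      _ ≤ _ := by
          gcongr
          exact card_noninj n m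
  have hlow := pow_sum_div_card_le_sum_pow (s := A)
    (f := fun v => ((A.filter fun w => G.Adj v w).card : ℝ)) (fun _ _ => Nat.cast_nonneg _) m
  have hup' : ∑ v ∈ A, ((A.filter fun w => G.Adj v w).card : ℝ)^(m+1)
      ≤ (((m:ℝ)+1) + ((m:ℝ)+1)^2) * (n:ℝ)^(m+1) := by
    have : ((∑ v ∈ A, ((A.filter fun w => G.Adj v w).card)^(m+1) : ℕ) : ℝ)
      ≤ (((m+1) * n^(m+1) + (m+1)^2 * n^m * n : ℕ) : ℝ) := by
      exact_mod_cast hdc ▸ hup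
    push_cast at this
    refine this.trans (le_of_eq ?_)
    ring
  have hApos : (0:ℝ) < A.card := by
    rcases A.eq_empty_or_nonempty with rfl | hA
    · simp at h
      have : 0 < δ * (n:ℝ)^2 := by positivity
      linarith
    · exact_mod_cast hA.card_pos
  have hAn : (A.card : ℝ) ≤ n := by
    have := card_le_univ A
    rw [Fintype.card_fin] at this
    exact_mod_cast this
  rw [div_le_iff₀ (by positivity)] at hlow
  have h1 : (δ * (n:ℝ)^2)^(m+1) ≤ (((m:ℝ)+1) + ((m:ℝ)+1)^2) * (n:ℝ)^(m+1) * (n:ℝ)^m := by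
    calc _ ≤ (∑ v ∈ A, ((A.filter fun w => G.Adj v w).card : ℝ))^(m+1) := by gcongr
      _ ≤ _ := hlow
      _ ≤ _ := by gcongr
  have h2 : (δ * (n:ℝ)^2)^(m+1) = (δ^(m+1) * n) * ((n:ℝ)^(m+1) * (n:ℝ)^m) := by ring
  rw [h2, mul_assoc (((m:ℝ)+1) + ((m:ℝ)+1)^2)] at h1
  have := le_of_mul_le_mul_right h1 (by positivity)
  linarith

lemma wheel_of_bip {n k : ℕ} (G : SimpleGraph (Fin n)) (u : Fin n)
    (f g : Fin k → Fin n) (hf : Function.Injective f) (hg : Function.Injective g)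
    (huf : ∀ i, G.Adj u (f i)) (hug : ∀ i, G.Adj u (g i)) (hfg : ∀ i j, G.Adj (f i) (g j)) :
    ContainsCopy (wheelGraph (2 * k + 1)) G := by
  classical
  let φ : Fin (2*k+1) → Fin n := fun i =>
    if h0 : i.val = 0 then u
    else if i.val % 2 = 1 then f ⟨(i.val - 1)/2, by omega⟩ else g ⟨(i.val-1)/2, by omega⟩
  have φ0 : ∀ i : Fin (2*k+1), i.val = 0 → φ i = u := by
    intro i hi; simp only [φ, dif_pos hi]
  have φ1 : ∀ i : Fin (2*k+1), i.val % 2 = 1 → ∃ j : Fin k, i.val = 2*j.val+1 ∧ φ i = f j := by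
    intro i hi
    refine ⟨⟨(i.val - 1)/2, by omega⟩, by simp only; omega, ?_⟩
    have : ¬ i.val = 0 := by omega
    simp only [φ, dif_neg this, if_pos hi]
  have φ2 : ∀ i : Fin (2*k+1), i.val ≠ 0 → i.val % 2 = 0 →
      ∃ j : Fin k, i.val = 2*j.val+2 ∧ φ i = g j := by
    intro i h0 hi
    refine ⟨⟨(i.val - 1)/2, by omega⟩, by simp only; omega, ?_⟩
    have h' : ¬ i.val % 2 = 1 := by omega
    simp only [φ, dif_neg h0, if_neg h']
  have hcase : ∀ i : Fin (2*k+1), (i.val = 0 ∧ φ i = u) ∨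
      (∃ j : Fin k, i.val = 2*j.val+1 ∧ φ i = f j) ∨ (∃ j : Fin k, i.val = 2*j.val+2 ∧ φ i = g j) := by
    intro i
    by_cases h0 : i.val = 0
    · exact Or.inl ⟨h0, φ0 i h0⟩
    · rcases Nat.mod_two_eq_zero_or_one i.val with h | h
      · exact Or.inr (Or.inr (φ2 i h0 h))
      · exact Or.inr (Or.inl (φ1 i h))
  refine ⟨⟨φ, ?_⟩, ?_⟩
  · intro a b hab
    apply Fin.ext
    rcases hcase a with ⟨ha, ha'⟩ | ⟨j, ha, ha'⟩ | ⟨j, ha, ha'⟩ <;>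
    rcases hcase b with ⟨hb, hb'⟩ | ⟨l, hb, hb'⟩ | ⟨l, hb, hb'⟩ <;>
    rw [ha', hb'] at hab
    · omega
    · exact absurd hab (huf l).ne
    · exact absurd hab (hug l).ne
    · exact absurd hab (huf j).ne'
    · have := hf hab; subst this; omega
    · exact absurd hab (hfg j l).ne
    · exact absurd hab (hug j).ne'
    · exact absurd hab (hfg l j).ne'
    · have := hg hab; subst this; omega
  · rintro a b ⟨hne, hadj⟩
    have hne' : a.val ≠ b.val := fun h => hne (Fin.ext h)
    change G.Adj (φ a) (φ b)
    rcases hcase a with ⟨ha, ha'⟩ | ⟨j, ha, ha'⟩ | ⟨j, ha, ha'⟩ <;>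
    rcases hcase b with ⟨hb, hb'⟩ | ⟨l, hb, hb'⟩ | ⟨l, hb, hb'⟩ <;>
    rw [ha', hb']
    · omega
    · exact huf l
    · exact hug l
    · exact (huf j).symm
    · omega
    · exact hfg j l
    · exact (hug j).symm
    · exact (hfg l j).symm
    · omega

open Finset in
lemma eig_bound {n : ℕ} (G : SimpleGraph (Fin n)) [DecidableRel G.Adj] (μ : ℝ)
    (h : Module.End.HasEigenvalue (Matrix.toLin' (G.adjMatrix ℝ)) μ) :
    ∃ u, μ^2 ≤ ∑ v ∈ G.neighborFinset u, (G.degree v : ℝ) := by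
  obtain ⟨x, hx⟩ := h.exists_hasEigenvector
  have hx0 : x ≠ 0 := hx.2
  have heq := hx.apply_eq_smul
  rw [Matrix.toLin'_apply] at heq
  have hv : ∀ v, ∑ w ∈ G.neighborFinset v, x w = μ * x v := by
    intro v
    have := congrFun heq v
    rwa [SimpleGraph.adjMatrix_mulVec_apply, Pi.smul_apply, smul_eq_mul] at this
  obtain ⟨v0, hv0⟩ := Function.ne_iff.mp hx0
  obtain ⟨u, -, hu⟩ := exists_max_image (univ : Finset (Fin n)) (fun v => |x v|) ⟨v0, mem_univ _⟩
  have hupos : 0 < |x u| := lt_of_lt_of_le (abs_pos.mpr hv0) (hu v0 (mem_univ _))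
  refine ⟨u, ?_⟩
  have h2 : μ^2 * x u = ∑ v ∈ G.neighborFinset u, ∑ w ∈ G.neighborFinset v, x w := by
    simp_rw [hv]
    rw [← mul_sum, hv]; ring
  have h3 : μ^2 * |x u| ≤ (∑ v ∈ G.neighborFinset u, (G.degree v : ℝ)) * |x u| := by
    calc μ^2 * |x u| = |μ^2 * x u| := by rw [abs_mul, abs_of_nonneg (sq_nonneg μ)]
      _ ≤ ∑ v ∈ G.neighborFinset u, ∑ w ∈ G.neighborFinset v, |x w| := by
        rw [h2]
        refine (abs_sum_le_sum_abs _ _).trans (sum_le_sum fun v _ => abs_sum_le_sum_abs _ _)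
      _ ≤ ∑ v ∈ G.neighborFinset u, ∑ w ∈ G.neighborFinset v, |x u| :=
        sum_le_sum fun v _ => sum_le_sum fun w _ => hu w (mem_univ _)
      _ = _ := by
        rw [sum_mul]
        refine sum_congr rfl fun v _ => ?_
        rw [sum_const, nsmul_eq_mul, SimpleGraph.card_neighborFinset_eq_degree]
  exact le_of_mul_le_mul_right h3 hupos

/-- The complete bipartite graph on `Fin n` with parts `{i < m}` and `{i ≥ m}`. -/
def bipG (n m : ℕ) : SimpleGraph (Fin n) where
  Adj a b := (a.val < m ∧ ¬ b.val < m) ∨ (¬ a.val < m ∧ b.val < m)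
  symm := ⟨fun a b h => by tauto⟩
  loopless := ⟨fun a h => by tauto⟩

lemma bipG_free (n m k : ℕ) (hk : 2 ≤ k) : WheelFree (2*k+1) (bipG n m) := by
  rintro ⟨f, hf⟩
  have h01 := hf ⟨0, by omega⟩ ⟨1, by omega⟩ (by simp [wheelGraph])
  have h02 := hf ⟨0, by omega⟩ ⟨2, by omega⟩ (by simp [wheelGraph])
  have h12 := hf ⟨1, by omega⟩ ⟨2, by omega⟩ (by simp [wheelGraph])
  simp only [bipG] at h01 h02 h12
  tauto

lemma eig_le_lam1 {n : ℕ} (G : SimpleGraph (Fin n)) [inst : DecidableRel G.Adj] (μ : ℝ)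
    (h : Module.End.HasEigenvalue (Matrix.toLin' (G.adjMatrix ℝ)) μ) : μ ≤ lam1 G := by
  classical
  unfold lam1
  refine le_csSup (Module.End.finite_hasEigenvalue _).bddAbove ?_
  simp only [Set.mem_ofPred_eq]
  convert h

lemma lam1_eig {n : ℕ} (G : SimpleGraph (Fin n)) [inst : DecidableRel G.Adj] (h : 0 < lam1 G) :
    Module.End.HasEigenvalue (Matrix.toLin' (G.adjMatrix ℝ)) (lam1 G) := by
  classical
  have hfin : {μ : ℝ | Module.End.HasEigenvalue (Matrix.toLin' (G.adjMatrix ℝ)) μ}.Finite :=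
    Module.End.finite_hasEigenvalue _
  have hdef : lam1 G = sSup {μ : ℝ | Module.End.HasEigenvalue (Matrix.toLin' (G.adjMatrix ℝ)) μ} := by
    unfold lam1
    congr!
  have hne : {μ : ℝ | Module.End.HasEigenvalue (Matrix.toLin' (G.adjMatrix ℝ)) μ}.Nonempty := by
    by_contra hne
    rw [Set.not_nonempty_iff_eq_empty] at hne
    rw [hdef, hne, Real.sSup_empty] at h
    exact lt_irrefl _ h
  have := hne.csSup_mem hfin
  rw [← hdef] at this
  exact this

open Finset in
lemma bipG_lam1 (n m : ℕ) (hm : 0 < m) (hmn : m < n) :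
    Real.sqrt ((m:ℝ) * ((n:ℝ) - m)) ≤ lam1 (bipG n m) := by
  classical
  have hc : (0:ℝ) < (n:ℝ) - m := by
    have : (m:ℝ) < n := by exact_mod_cast hmn
    linarith
  have hm0 : (0:ℝ) < m := by exact_mod_cast hm
  apply eig_le_lam1
  apply Module.End.hasEigenvalue_of_hasEigenvector
    (x := fun i : Fin n => if i.val < m then Real.sqrt ((n:ℝ) - m) else Real.sqrt m)
  have hcard1 : (univ.filter fun i : Fin n => i.val < m).card = m := by
    rw [Fin.card_filter_val_lt]; omega
  have hcard2 : ((univ.filter fun i : Fin n => ¬ i.val < m).card : ℝ) = (n:ℝ) - m := by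
    have := card_filter_add_card_filter_not (s := (univ : Finset (Fin n))) (fun i : Fin n => i.val < m)
    rw [hcard1, card_univ, Fintype.card_fin] at this
    have h' : (m:ℝ) + ((univ.filter fun i : Fin n => ¬ i.val < m).card : ℝ) = n := by
      exact_mod_cast this
    linarith
  refine ⟨Module.End.mem_eigenspace_iff.mpr ?_, ?_⟩
  · rw [Matrix.toLin'_apply]
    funext i
    rw [SimpleGraph.adjMatrix_mulVec_apply, Pi.smul_apply, smul_eq_mul, Real.sqrt_mul hm0.le]
    have hs1 := Real.mul_self_sqrt hm0.le
    have hs2 := Real.mul_self_sqrt hc.le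
    by_cases hi : i.val < m
    · have hN : (bipG n m).neighborFinset i = univ.filter fun j : Fin n => ¬ j.val < m := by
        ext j; rw [SimpleGraph.mem_neighborFinset]; simp only [bipG, mem_filter, mem_univ, true_and]; tauto
      rw [hN, if_pos hi]
      rw [sum_congr rfl (g := fun _ => Real.sqrt m)
        (fun j hj => if_neg (mem_filter.mp hj).2), sum_const, nsmul_eq_mul, hcard2]
      rw [mul_assoc, hs2]; ring
    · have hN : (bipG n m).neighborFinset i = univ.filter fun j : Fin n => j.val < m := by
        ext j; rw [SimpleGraph.mem_neighborFinset]; simp only [bipG, mem_filter, mem_univ, true_and]; tauto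
      rw [hN, if_neg hi]
      rw [sum_congr rfl (g := fun _ => Real.sqrt ((n:ℝ) - m))
        (fun j hj => if_pos (mem_filter.mp hj).2), sum_const, nsmul_eq_mul, hcard1]
      rw [mul_right_comm, hs1]
  · intro h0
    have := congrFun h0 ⟨0, by omega⟩
    simp only [hm, if_true, Pi.zero_apply] at this
    exact (Real.sqrt_pos.mpr hc).ne' this

open Finset in
lemma cutCount_eq {n : ℕ} (G : SimpleGraph (Fin n)) [DecidableRel G.Adj] (A : Finset (Fin n)) :
    cutCount G A = ∑ v ∈ A, (Aᶜ.filter fun w => G.Adj v w).card := by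
  classical
  unfold cutCount
  rw [← card_sigma]
  refine card_bij (fun p _ => ⟨p.1, p.2⟩) ?_ ?_ ?_
  · intro p hp
    simp only [mem_filter, mem_univ, true_and] at hp
    simp only [mem_sigma, mem_filter, mem_compl]
    tauto
  · intro p _ q _ hpq
    simp at hpq
    exact Prod.ext hpq.1 hpq.2
  · rintro ⟨a, b⟩ hab
    simp only [mem_sigma, mem_filter, mem_compl] at hab
    exact ⟨(a, b), by simp; tauto, rfl⟩

open Finset in
lemma cutCount_le {n : ℕ} (G : SimpleGraph (Fin n)) (A : Finset (Fin n)) :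
    cutCount G A ≤ A.card * (Aᶜ).card := by
  classical
  rw [cutCount_eq, ← smul_eq_mul]
  exact sum_le_card_nsmul _ _ _ fun v _ => card_filter_le _ _

open Finset in
lemma deg_split {n : ℕ} (G : SimpleGraph (Fin n)) [DecidableRel G.Adj] (A : Finset (Fin n)) (v) :
    G.degree v = (A.filter fun w => G.Adj v w).card + (Aᶜ.filter fun w => G.Adj v w).card := by
  classical
  rw [← card_union_of_disjoint, ← filter_union, union_compl, ← SimpleGraph.card_neighborFinset_eq_degree]
  · congr 1; ext w; simp
  · exact disjoint_filter_filter disjoint_compl_right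

/-- A maximum cut of a spectral extremal `W_{2k+1}`-free graph has at
least `(1/4 - ε)n²` crossing edges and both parts have size `(1/2 ± √ε)n`. -/
theorem maxcut_large (k : ℕ) (hk : 2 ≤ k) (ε : ℝ) (hε : 0 < ε) :
    ∃ N : ℕ, ∀ n : ℕ, N ≤ n → ∀ G : SimpleGraph (Fin n), IsSpexWheel (2 * k + 1) G →
      ∀ S T : Finset (Fin n), IsMaxCut G S T →
        (1 / 4 - ε) * (n : ℝ) ^ 2 ≤ (cutCount G S : ℝ) ∧
        (1 / 2 - Real.sqrt ε) * (n : ℝ) ≤ (S.card : ℝ) ∧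
        (S.card : ℝ) ≤ (1 / 2 + Real.sqrt ε) * (n : ℝ) ∧
        (1 / 2 - Real.sqrt ε) * (n : ℝ) ≤ (T.card : ℝ) ∧
        (T.card : ℝ) ≤ (1 / 2 + Real.sqrt ε) * (n : ℝ) := by
  classical
  obtain ⟨m, rfl⟩ : ∃ m, k = m + 1 := ⟨k - 1, by omega⟩
  obtain ⟨N1, hN1⟩ := exists_nat_gt ((((m:ℝ)+1) + ((m:ℝ)+1)^2) / (ε/2)^(m+1))
  obtain ⟨N2, hN2⟩ := exists_nat_gt (1 / ε)
  refine ⟨N1 + N2 + 2, fun n hn G hG S T hST => ?_⟩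
  obtain ⟨hfree, hmax⟩ := hG
  obtain ⟨rfl, hcut⟩ := hST
  have hnN1 : (N1:ℝ) ≤ n := by exact_mod_cast (by omega : N1 ≤ n)
  have hnN2 : (N2:ℝ) ≤ n := by exact_mod_cast (by omega : N2 ≤ n)
  have hn2 : (2:ℝ) ≤ n := by exact_mod_cast (by omega : 2 ≤ n)
  have hk1 : ((m:ℝ)+1) + ((m:ℝ)+1)^2 < (ε/2)^(m+1) * n := by
    rw [div_lt_iff₀ (by positivity)] at hN1
    have : (N1:ℝ) * (ε/2)^(m+1) ≤ n * (ε/2)^(m+1) := by gcongr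
    linarith
  have hk2 : 1 < ε * n := by
    rw [div_lt_iff₀ hε] at hN2
    have : (N2:ℝ) * ε ≤ n * ε := by gcongr
    linarith
  -- lower bound on the spectral radius
  have hl1 := bipG_lam1 n (n/2) (by omega) (by omega)
  have hl2 := hl1.trans (hmax _ (bipG_free n (n/2) (m+1) hk))
  have hprod : ((n:ℝ)^2 - 1)/4 ≤ ((n/2 : ℕ):ℝ) * ((n:ℝ) - ((n/2 : ℕ):ℝ)) := by
    rcases Nat.even_or_odd' n with ⟨c, hc | hc⟩
    · have : n/2 = c := by omega
      rw [this, hc]; push_cast; nlinarith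
    · have : n/2 = c := by omega
      rw [this, hc]; push_cast; nlinarith
  have hprodpos : 0 < ((n/2 : ℕ):ℝ) * ((n:ℝ) - ((n/2 : ℕ):ℝ)) := by nlinarith
  have hlpos : 0 < lam1 G := lt_of_lt_of_le (Real.sqrt_pos.mpr hprodpos) hl2
  have hlsq : ((n:ℝ)^2 - 1)/4 ≤ (lam1 G)^2 := hprod.trans ((Real.sqrt_le_left hlpos.le).mp hl2)
  obtain ⟨u, hu⟩ := eig_bound G _ (lam1_eig G hlpos)
  set A := G.neighborFinset u with hA
  -- few edges inside the neighbourhood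
  have hfew : ∑ v ∈ A, ((A.filter fun w => G.Adj v w).card : ℝ) < ε/2 * (n:ℝ)^2 := by
    by_contra hcon
    push Not at hcon
    obtain ⟨f, g, hf, hg, hfA, hgA, hfg⟩ := kst_aux n m G A (ε/2) (by positivity) hk1 hcon
    apply hfree
    refine wheel_of_bip G u f g hf hg (fun i => ?_) (fun i => ?_) hfg
    · simpa [hA] using hfA i
    · simpa [hA] using hgA i
  have hsum : ∑ v ∈ A, (G.degree v : ℝ)
      = ∑ v ∈ A, ((A.filter fun w => G.Adj v w).card : ℝ) + (cutCount G A : ℝ) := by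
    rw [cutCount_eq]
    push_cast
    rw [← Finset.sum_add_distrib]
    refine Finset.sum_congr rfl fun v _ => ?_
    rw [deg_split G A v]
    push_cast
    rfl
  have hAS : (cutCount G A : ℝ) ≤ cutCount G S := by exact_mod_cast hcut A
  have hmain : (1 / 4 - ε) * (n : ℝ) ^ 2 ≤ (cutCount G S : ℝ) := by
    have h4 : 1 ≤ ε * (n:ℝ)^2 / 2 := by nlinarith
    nlinarith
  have hle : (cutCount G S : ℝ) ≤ (S.card : ℝ) * (Sᶜ.card : ℝ) := by exact_mod_cast cutCount_le G S
  have hcard : (Sᶜ.card : ℝ) = n - S.card := by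
    have := S.card_add_card_compl
    rw [Fintype.card_fin] at this
    have h' : (S.card : ℝ) + (Sᶜ.card : ℝ) = n := by exact_mod_cast this
    linarith
  rw [hcard] at hle ⊢
  have hsq : ((S.card:ℝ) - n/2)^2 ≤ (Real.sqrt ε * n)^2 := by
    rw [mul_pow, Real.sq_sqrt hε.le]
    nlinarith
  have habs := abs_le_of_sq_le_sq' hsq (by positivity)
  refine ⟨hmain, ?_, ?_, ?_, ?_⟩ <;> linarith [habs.1, habs.2]
end
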